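/- Let n ≥ 2 and α₀ ∈ (0,1). There exist a bounded set E ⊂ ℝⁿ with dim_L E = n − 2α₀ and a homeomorphism f : ℝⁿ → ℝⁿ which is Lipschitz, η-quasisymmetric for some homeomorphism η : [0,∞) → [0,∞), differentiable almost everywhere with Jacobian J_f = |det Df| satisfying the change-of-variables formula ∫ g(f(x)) J_f(x) dx = ∫ g(y) dy for every nonnegative measurable g, and with J_f ∈ A_1(ℝⁿ; closure of E), such that for every α ∈ (α₀, 1) the composition operator u ↦ u∘f is unbounded on Q_α(ℝⁿ): for every constant C > 0 there exists u ∈ Q_α(ℝⁿ) with ‖u∘f‖_{Q_α} > C ‖u‖_{Q_α} and 0 < ‖u‖_{Q_α} < ∞. -/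

import Mathlib

/-!
Let `0 < l < 1/2` satisfy `l ^ (n - 2α₀) = 2 ^ (-n)`. The set `E` is the union over `k` of the grids
whose coordinates are midpoints of the intervals of generation at most `k` in the Cantor
construction of ratio `l`. Distinct points of generation at most `k` are `≳ l ^ k` apart, and a cube
of edge `L ≥ l ^ k` meets at most a multiple of `(L / l ^ k) ^ (n - 2α₀)` of them; this determines
`dim_L E`.

The balls `B(p, ε)`, `p ∈ E` of generation `k` and `ε ~ l ^ k`, are disjoint, and `f` maps each of
them to itself by `p + v ↦ p + (|v| / ε) v`. The distance `|f x - f y|` is comparable to `|x - y|`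
times a gauge depending only on the position of `x` and the scale `|x - y|`. This makes `f`
Lipschitz and quasisymmetric, and it makes `J_f` nearly constant on balls far from `E`; the
Jacobian formula is Rademacher's theorem together with the area formula.

For `α > α₀` write `β = n - 2α` and let `u` be a tent with spikes of radius `s` at the points of
generation at most `k`, where `s ^ β = 2 ^ (-n k)`. A ball of radius `r ≥ s` contains at most a
multiple of `(r / s) ^ β` of these points, so the `Q_α`-norm of `u` is bounded independently of `k`.
Composition with `f` widens the spikes at the roughly `2 ^ (n k)` points of generation exactly `k`
to radius `√(s ε)`, and the energy of `u ∘ f` on a fixed ball is at least a multiple of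
`2 ^ (n k) (s ε) ^ (β / 2) ~ l ^ (-k (α - α₀))`, which is unbounded in `k`.
-/

open MeasureTheory Metric Filter Set ENNReal NNReal

noncomputable section

/-- Points of `ℝⁿ`. -/
abbrev Pt (n : ℕ) := EuclideanSpace ℝ (Fin n)

/-- The axis-parallel closed cube with lower corner `c` and edge length `r`. -/
def closedCube {n : ℕ} (c : Pt n) (r : ℝ) : Set (Pt n) :=
  {x | ∀ i, c i ≤ x i ∧ x i ≤ c i + r}

/-- `Ncov r E`: the minimal number of axis-parallel closed cubes of edge length `r`
needed to cover `E` (junk value `0` if no finite cover exists). -/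
def Ncov {n : ℕ} (r : ℝ) (E : Set (Pt n)) : ℕ :=
  sInf {m : ℕ | ∃ s : Finset (Pt n), s.card = m ∧ E ⊆ ⋃ c ∈ s, closedCube c r}

/-- Upper Minkowski dimension (intended for bounded sets). -/
def dimM {n : ℕ} (F : Set (Pt n)) : ℝ :=
  limsup (fun r : ℝ => Real.log (Ncov r F) / Real.log (1 / r)) (nhdsWithin 0 (Ioi 0))

/-- The set of ratios `log N_cov(r, E ∩ B) / log (r_B / r)` over balls `B = B(x, r_B)`
with `N * r ≤ r_B ≤ R`. -/
def locRatios {n : ℕ} (E : Set (Pt n)) (N r R : ℝ) : Set ℝ :=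
  {d | ∃ (x : Pt n) (rB : ℝ), 0 < rB ∧ N * r ≤ rB ∧ rB ≤ R ∧
        d = Real.log (Ncov r (E ∩ ball x rB)) / Real.log (rB / r)}

/-- The local self-similar Minkowski dimension. -/
def dimLoc {n : ℕ} (E : Set (Pt n)) : ℝ :=
  liminf (fun N : ℝ =>
    limsup (fun r : ℝ => sSup (locRatios E N r 1)) (nhdsWithin 0 (Ioi 0))) atTop

/-- The global self-similar Minkowski dimension. -/
def dimGlob {n : ℕ} (E : Set (Pt n)) : ℝ :=
  liminf (fun N : ℝ =>
    sSup {d : ℝ | ∃ r : ℝ, 0 < r ∧ ∃ (x : Pt n) (rB : ℝ), 0 < rB ∧ N * r ≤ rB ∧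
      d = Real.log (Ncov r (E ∩ ball x rB)) / Real.log (rB / r)}) atTop

/-- The `Q_α`-energy `Φ_α(u, B(x₀,r)) = |B|^{2α/n-1} ∬_{B×B} |u(x)-u(y)|²/|x-y|^{n+2α}`. -/
def Phi {n : ℕ} (α : ℝ) (u : Pt n → ℝ) (x₀ : Pt n) (r : ℝ) : ℝ≥0∞ :=
  (volume (ball x₀ r)) ^ (2 * α / (n : ℝ) - 1) *
    ∫⁻ x in ball x₀ r, ∫⁻ y in ball x₀ r,
      ENNReal.ofReal (|u x - u y| ^ 2 / ‖x - y‖ ^ ((n : ℝ) + 2 * α))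

/-- The `Q_α`-norm of `u`. -/
def Qnorm {n : ℕ} (α : ℝ) (u : Pt n → ℝ) : ℝ≥0∞ :=
  ⨆ (x₀ : Pt n) (r : ℝ) (_ : 0 < r),
    (ENNReal.ofReal (r ^ (2 * α - (n : ℝ))) *
      ∫⁻ x in ball x₀ r, ∫⁻ y in ball x₀ r,
        ENNReal.ofReal (|u x - u y| ^ 2 / ‖x - y‖ ^ ((n : ℝ) + 2 * α))) ^ (1/2 : ℝ)

/-- Membership in `Q_α(ℝⁿ)`: `u ∈ L²_loc` and the `Q_α`-norm is finite. -/
def MemQ {n : ℕ} (α : ℝ) (u : Pt n → ℝ) : Prop :=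
  LocallyIntegrable (fun x => |u x| ^ 2) volume ∧ Qnorm α u < ⊤

/-- `Ψ_{α,q}(u, B(x₀,r))`. -/
def Psi {n : ℕ} (α q : ℝ) (u : Pt n → ℝ) (x₀ : Pt n) (r : ℝ) : ℝ≥0∞ :=
  ∑' k : ℕ, ENNReal.ofReal ((2:ℝ) ^ (2 * (k:ℝ) * α)) *
    ((volume (ball x₀ r))⁻¹ * ∫⁻ x in ball x₀ r,
      ⨅ c : ℝ, ((volume (ball x ((2:ℝ) ^ (-(k:ℝ)) * r)))⁻¹ *
        ∫⁻ z in ball x ((2:ℝ) ^ (-(k:ℝ)) * r), ENNReal.ofReal (|u z - c| ^ q)) ^ (2 / q))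

/-- The quantity `inf_c ( ⨍_{B(x,ρ)} |u - c|^σ )^{1/σ}`. -/
def oscAvg {n : ℕ} (σ : ℝ) (u : Pt n → ℝ) (x : Pt n) (ρ : ℝ) : ℝ≥0∞ :=
  ⨅ c : ℝ, ((volume (ball x ρ))⁻¹ *
    ∫⁻ w in ball x ρ, ENNReal.ofReal (|u w - c| ^ σ)) ^ (1/σ)

/-- `f` is `η`-quasisymmetric, where the homeomorphism `η` of `[0,∞)` is encoded as an
order isomorphism of `ℝ≥0`. -/
def IsQS {n : ℕ} (f : Pt n → Pt n) (η : ℝ≥0 ≃o ℝ≥0) : Prop :=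
  ∀ x a b : Pt n, x ≠ b →
    nndist (f x) (f a) ≤ η (nndist x a / nndist x b) * nndist (f x) (f b)

/-- The local Muckenhoupt class `A₁(ℝⁿ; S)`: the `A₁` condition holds on every ball
`B(x₀,r)` with `2r < dist(x₀, S)`. -/
def MemA1 {n : ℕ} (w : Pt n → ℝ) (S : Set (Pt n)) : Prop :=
  ∃ C > 0, ∀ (x₀ : Pt n) (r : ℝ), 0 < r →
    ENNReal.ofReal (2 * r) < EMetric.infEdist x₀ S →
    ⨍ x in ball x₀ r, w x ∂volume ≤ C * essInf w (volume.restrict (ball x₀ r))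

/-- `J` is the a.e. Jacobian of `f` (`J = |det Df|` a.e.) and the change-of-variables
formula holds for all nonnegative measurable integrands. -/
def JacobianCOV {n : ℕ} (f : Pt n → Pt n) (J : Pt n → ℝ) : Prop :=
  (∀ᵐ x ∂(volume : Measure (Pt n)), ∃ D : Pt n →L[ℝ] Pt n,
      HasFDerivAt f D x ∧ J x = |D.det|) ∧
  ∀ g : Pt n → ℝ≥0∞, Measurable g →
    ∫⁻ x, g (f x) * ENNReal.ofReal (J x) = ∫⁻ y, g y

/-- The hyperplane `ℝ^{n-1} × {0}` (the last coordinate vanishes). -/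
def Hset (n : ℕ) : Set (Pt n) := {x | ∀ i : Fin n, (i : ℕ) = n - 1 → x i = 0}

/-- The open upper half-space (last coordinate positive). -/
def upperHalf (n : ℕ) : Set (Pt n) := {x | ∀ i : Fin n, (i : ℕ) = n - 1 → 0 < x i}

/-- The open lower half-space (last coordinate negative). -/
def lowerHalf (n : ℕ) : Set (Pt n) := {x | ∀ i : Fin n, (i : ℕ) = n - 1 → x i < 0}

/-- The hyperbolic length `∫₀¹ |γ'(t)|/dist(γ(t),H) dt` of a curve `γ`. -/
def hypLen {n : ℕ} (H : Set (Pt n)) (γ : ℝ → Pt n) : ℝ :=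
  ∫ t in (0:ℝ)..1, ‖deriv γ t‖ / Metric.infDist (γ t) H

/-- The hyperbolic-type distance associated with the set `H`: the infimum of hyperbolic
lengths of differentiable curves joining `z` and `w` in the complement of `H`. -/
def hypDist {n : ℕ} (H : Set (Pt n)) (z w : Pt n) : ℝ :=
  sInf {L : ℝ | ∃ γ : ℝ → Pt n, γ 0 = z ∧ γ 1 = w ∧
    (∀ t ∈ Icc (0:ℝ) 1, DifferentiableAt ℝ γ t ∧ γ t ∉ H) ∧ L = hypLen H γ}

/-- `L_f(z,t) = sup { |f(z)-f(w)| : |z-w| ≤ t }`. -/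
def Lf {n : ℕ} (f : Pt n → Pt n) (z : Pt n) (t : ℝ) : ℝ :=
  sSup ((fun w => dist (f z) (f w)) '' closedBall z t)

open scoped Topology

/-! ### Radial stretches -/

section RadialGauge

variable {X : Type*} [PseudoMetricSpace X]

/-- The gauge of a radial stretch: up to bounded factors, points at distance `t` from `x` are mapped
to points at distance `radialGauge p r x t * t` from the image of `x`. -/
def radialGauge (p : X) (r : ℝ) (x : X) (t : ℝ) : ℝ := min 1 ((dist x p + t) / r)

variable {p x y : X} {r s t : ℝ}

lemma radialGauge_le_one : radialGauge p r x t ≤ 1 := min_le_left _ _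

lemma radialGauge_pos (hr : 0 < r) (ht : 0 < t) : 0 < radialGauge p r x t := by
  unfold radialGauge
  positivity

lemma radialGauge_mono (hr : 0 ≤ r) : Monotone (radialGauge p r x) := by
  intro s t hst
  unfold radialGauge
  gcongr

lemma continuous_radialGauge : Continuous (radialGauge p r x) := by
  unfold radialGauge
  fun_prop

lemma radialGauge_of_le_dist (hr : 0 < r) (h : r ≤ dist x p) (ht : 0 ≤ t) :
    radialGauge p r x t = 1 :=
  min_eq_left ((one_le_div hr).2 (by linarith))

lemma radialGauge_le_mul (hr : 0 < r) (hs : 0 ≤ s) (ht : 0 < t) :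
    radialGauge p r x s ≤ (1 + s / t) * radialGauge p r x t := by
  have hst : 0 ≤ s / t := by positivity
  rw [radialGauge, radialGauge, mul_min_of_nonneg _ _ (by positivity), mul_one]
  refine min_le_min (by linarith) ?_
  rw [← mul_div_assoc]
  gcongr
  calc dist x p + s ≤ dist x p + s + (t + s / t * dist x p) :=
        le_add_of_nonneg_right (by positivity)
    _ = (1 + s / t) * (dist x p + t) := by field_simp; ring

lemma min_add_min_le_two_mul_radialGauge (hr : 0 ≤ r) :
    min 1 (dist x p / r) + min 1 (dist y p / r) ≤ 2 * radialGauge p r x (dist x y) := by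
  have hx : min 1 (dist x p / r) ≤ radialGauge p r x (dist x y) :=
    min_le_min_left _ (by gcongr; exact le_add_of_nonneg_right dist_nonneg)
  have hy : min 1 (dist y p / r) ≤ radialGauge p r x (dist x y) :=
    min_le_min_left _ (by gcongr; linarith [dist_triangle_left y p x])
  linarith

lemma radialGauge_le_two_mul_min_add_min (hr : 0 ≤ r) :
    radialGauge p r x (dist x y) ≤ 2 * (min 1 (dist x p / r) + min 1 (dist y p / r)) := by
  have hx : 0 ≤ dist x p / r := by positivity
  have hy : 0 ≤ dist y p / r := by positivity
  have hxy : (dist x p + dist x y) / r ≤ 2 * (dist x p / r) + 2 * (dist y p / r) := by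
    rw [← mul_div_assoc, ← mul_div_assoc, ← add_div]
    refine div_le_div_of_nonneg_right ?_ hr
    linarith [dist_triangle_right x y p, dist_nonneg (x := y) (y := p)]
  rw [radialGauge]
  grind

end RadialGauge

section RadialStretch

variable {V : Type*} [NormedAddCommGroup V] [NormedSpace ℝ V]

/-- The radial stretch of radius `r` about `p`: the identity outside `ball p r`, and
`p + v ↦ p + (‖v‖ / r) • v` inside. -/
def radialStretch (p : V) (r : ℝ) (x : V) : V := p + min 1 (dist x p / r) • (x - p)

variable {p x y : V} {r : ℝ}

lemma radialStretch_center : radialStretch p r p = p := by simp [radialStretch]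

lemma radialStretch_of_le_dist (hr : 0 < r) (h : r ≤ dist x p) : radialStretch p r x = x := by
  rw [radialStretch, min_eq_left ((one_le_div hr).2 h), one_smul, add_sub_cancel]

lemma radialStretch_of_dist_le (hr : 0 < r) (h : dist x p ≤ r) :
    radialStretch p r x = p + (dist x p / r) • (x - p) := by
  rw [radialStretch, min_eq_right ((div_le_one hr).2 h)]

lemma dist_radialStretch_center (hr : 0 < r) (h : dist x p ≤ r) :
    dist (radialStretch p r x) p = dist x p ^ 2 / r := by
  rw [radialStretch_of_dist_le hr h, dist_self_add_left, norm_smul, ← dist_eq_norm,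
    Real.norm_of_nonneg (by positivity)]
  ring

lemma dist_radialStretch_self_le (hr : 0 < r) (h : dist x p ≤ r) :
    dist (radialStretch p r x) x ≤ r / 4 := by
  have hsub : p + (dist x p / r) • (x - p) - x = (dist x p / r - 1) • (x - p) := by module
  rw [radialStretch_of_dist_le hr h, dist_eq_norm, hsub, norm_smul, ← dist_eq_norm x,
    Real.norm_of_nonpos (sub_nonpos.2 ((div_le_one hr).2 h)), ← mul_le_mul_iff_left₀ hr]
  calc -(dist x p / r - 1) * dist x p * r = dist x p * (r - dist x p) := by field_simp; ring
    _ ≤ r / 4 * r := by linarith [sq_nonneg (dist x p - r / 2)]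

lemma exists_radialStretch_eq (hr : 0 < r) (hy : dist y p < r) :
    ∃ x, dist x p < r ∧ radialStretch p r x = y := by
  rcases eq_or_ne y p with rfl | hne
  · exact ⟨y, by simpa, radialStretch_center⟩
  have hd : 0 < dist y p := dist_pos.2 hne
  set c := √(r / dist y p)
  have hc_sq : c * c = r / dist y p := Real.mul_self_sqrt (by positivity)
  have hdist : dist (p + c • (y - p)) p = c * dist y p := by
    rw [dist_eq_norm, add_sub_cancel_left, norm_smul, Real.norm_of_nonneg (Real.sqrt_nonneg _),
      ← dist_eq_norm]
  have hlt : c * dist y p < r := by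
    refine lt_of_pow_lt_pow_left₀ 2 hr.le ?_
    calc (c * dist y p) ^ 2 = c * c * dist y p ^ 2 := by ring
      _ = r * dist y p := by rw [hc_sq]; field_simp
      _ < r ^ 2 := by rw [sq]; gcongr
  have hone : c * dist y p / r * c = 1 := by
    rw [show c * dist y p / r * c = c * c * dist y p / r by ring, hc_sq]
    field_simp
  refine ⟨p + c • (y - p), hdist.trans_lt hlt, ?_⟩
  rw [radialStretch_of_dist_le hr (hdist.trans_lt hlt).le, hdist, add_sub_cancel_left, smul_smul,
    hone, one_smul, add_sub_cancel]

lemma min_one_div_mul_le {r s t : ℝ} (hs : 0 ≤ s) (hst : s ≤ t) :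
    min 1 (t / r) * s ≤ min 1 (s / r) * t := by
  rw [min_mul_of_nonneg _ _ hs, min_mul_of_nonneg _ _ (hs.trans hst), div_mul_eq_mul_div,
    div_mul_eq_mul_div, one_mul, one_mul, mul_comm s t]
  exact min_le_min_right _ hst

lemma norm_smul_sub_smul_le {a b : ℝ} {v w : V} (ha : 0 ≤ a) (hab : a ≤ b) (h : b * ‖v‖ ≤ a * ‖w‖) :
    ‖a • v - b • w‖ ≤ (a + b) * ‖v - w‖ := by
  have hvw : b * ‖w‖ ≤ b * (‖v‖ + ‖v - w‖) := by
    have := ha.trans hab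
    gcongr
    exact norm_le_norm_add_norm_sub v w
  calc ‖a • v - b • w‖ = ‖a • (v - w) - (b - a) • w‖ := by congr 1; module
    _ ≤ ‖a • (v - w)‖ + ‖(b - a) • w‖ := norm_sub_le _ _
    _ = a * ‖v - w‖ + (b - a) * ‖w‖ := by
      rw [norm_smul, norm_smul, Real.norm_of_nonneg ha, Real.norm_of_nonneg (sub_nonneg.2 hab)]
    _ ≤ (a + b) * ‖v - w‖ := by linarith

lemma dist_radialStretch_le (hr : 0 ≤ r) :
    dist (radialStretch p r x) (radialStretch p r y)
      ≤ (min 1 (dist x p / r) + min 1 (dist y p / r)) * dist x y := by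
  wlog h : dist x p ≤ dist y p generalizing x y
  · rw [dist_comm, dist_comm x y, add_comm (min 1 (dist x p / r))]
    exact this (le_of_not_ge h)
  rw [radialStretch, radialStretch, dist_add_left, dist_eq_norm, dist_eq_norm x y,
    ← sub_sub_sub_cancel_right x y p]
  refine norm_smul_sub_smul_le (by positivity) (by gcongr) ?_
  simpa only [← dist_eq_norm] using min_one_div_mul_le dist_nonneg h

lemma dist_radialStretch_le_radialGauge (hr : 0 ≤ r) :
    dist (radialStretch p r x) (radialStretch p r y)
      ≤ 2 * radialGauge p r x (dist x y) * dist x y :=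
  (dist_radialStretch_le hr).trans <|
    mul_le_mul_of_nonneg_right (min_add_min_le_two_mul_radialGauge hr) dist_nonneg

end RadialStretch

section RadialStretchInner

variable {V : Type*} [NormedAddCommGroup V] [InnerProductSpace ℝ V]

lemma inner_smul_sub_smul_sub (a b : ℝ) (v w : V) :
    inner ℝ (a • v - b • w) (v - w)
      = (a + b) / 2 * ‖v - w‖ ^ 2 + (a - b) / 2 * (‖v‖ ^ 2 - ‖w‖ ^ 2) := by
  rw [norm_sub_sq_real, inner_sub_left, inner_sub_right, inner_sub_right, real_inner_smul_left,
    real_inner_smul_left, real_inner_smul_left, real_inner_smul_left, real_inner_self_eq_norm_sq,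
    real_inner_self_eq_norm_sq, real_inner_comm v w]
  ring

lemma le_norm_smul_sub_smul {a b : ℝ} {v w : V} (h : 0 ≤ (a - b) * (‖v‖ - ‖w‖)) :
    (a + b) / 2 * ‖v - w‖ ≤ ‖a • v - b • w‖ := by
  rcases (norm_nonneg (v - w)).eq_or_lt with h0 | h0
  · simp [← h0]
  refine le_of_mul_le_mul_right ?_ h0
  calc (a + b) / 2 * ‖v - w‖ * ‖v - w‖
      ≤ (a + b) / 2 * ‖v - w‖ ^ 2 + (a - b) * (‖v‖ - ‖w‖) * (‖v‖ + ‖w‖) / 2 := by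
        rw [mul_assoc, ← sq]
        exact le_add_of_nonneg_right (by positivity)
    _ = inner ℝ (a • v - b • w) (v - w) := by rw [inner_smul_sub_smul_sub]; ring
    _ ≤ ‖a • v - b • w‖ * ‖v - w‖ := real_inner_le_norm _ _

variable {p x y : V} {r : ℝ}

lemma le_dist_radialStretch (hr : 0 ≤ r) :
    (min 1 (dist x p / r) + min 1 (dist y p / r)) / 2 * dist x y
      ≤ dist (radialStretch p r x) (radialStretch p r y) := by
  rw [radialStretch, radialStretch, dist_add_left, dist_eq_norm _ (_ • _), dist_eq_norm x y,
    ← sub_sub_sub_cancel_right x y p]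
  refine le_norm_smul_sub_smul ?_
  rw [← dist_eq_norm, ← dist_eq_norm]
  rcases le_total (dist x p) (dist y p) with h | h
  · exact mul_nonneg_of_nonpos_of_nonpos (sub_nonpos.2 (by gcongr)) (sub_nonpos.2 h)
  · exact mul_nonneg (sub_nonneg.2 (by gcongr)) (sub_nonneg.2 h)

lemma radialGauge_le_dist_radialStretch (hr : 0 ≤ r) :
    radialGauge p r x (dist x y) * dist x y / 4
      ≤ dist (radialStretch p r x) (radialStretch p r y) := by
  refine le_trans ?_ (le_dist_radialStretch hr)
  have := mul_le_mul_of_nonneg_right (radialGauge_le_two_mul_min_add_min (p := p) (x := x) (y := y)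
    hr) (dist_nonneg (x := x) (y := y))
  linarith

end RadialStretchInner

/-! ### Stretching in a family of separated balls -/

/-- A family of balls `ball p (radius p)`, indexed by their centers, whose concentric doubles are
pairwise disjoint. -/
structure SeparatedBalls (X : Type*) [PseudoMetricSpace X] where
  /-- The set of centers. -/
  centers : Set X
  /-- The radius of the ball with a given center. -/
  radius : X → ℝ
  radius_pos : ∀ p ∈ centers, 0 < radius p
  two_mul_radius_add_le_dist :
    ∀ p ∈ centers, ∀ q ∈ centers, p ≠ q → 2 * (radius p + radius q) ≤ dist p q

namespace SeparatedBalls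

section Gauge

variable {X : Type*} [PseudoMetricSpace X] (F : SeparatedBalls X)

lemma center_unique {x p q : X} (hp : p ∈ F.centers) (hq : q ∈ F.centers)
    (hxp : dist x p < F.radius p) (hxq : dist x q < F.radius q) : p = q := by
  by_contra h
  linarith [F.two_mul_radius_add_le_dist p hp q hq h, dist_triangle_left p q x, F.radius_pos p hp,
    F.radius_pos q hq]

open Classical in
/-- The gauge of the family: `radialGauge p (F.radius p) x` on the ball about `p`, and `1` outside
all balls. -/
def gauge (x : X) (t : ℝ) : ℝ :=
  if h : ∃ p ∈ F.centers, dist x p < F.radius p then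
    radialGauge h.choose (F.radius h.choose) x t
  else 1

variable {F} {x p : X} {r s t : ℝ}

lemma gauge_of_mem (hp : p ∈ F.centers) (hxp : dist x p < F.radius p) :
    F.gauge x = radialGauge p (F.radius p) x := by
  have h : ∃ p ∈ F.centers, dist x p < F.radius p := ⟨p, hp, hxp⟩
  ext t
  rw [gauge, dif_pos h, F.center_unique hp h.choose_spec.1 hxp h.choose_spec.2]

lemma gauge_of_not_mem (h : ¬∃ p ∈ F.centers, dist x p < F.radius p) : F.gauge x = 1 := by
  ext t
  rw [gauge, dif_neg h, Pi.one_apply]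

variable (F x)

lemma gauge_eq_radialGauge_or_eq_one :
    (∃ p ∈ F.centers, dist x p < F.radius p ∧ F.gauge x = radialGauge p (F.radius p) x) ∨
      F.gauge x = 1 := by
  by_cases h : ∃ p ∈ F.centers, dist x p < F.radius p
  · obtain ⟨p, hp, hxp⟩ := h
    exact .inl ⟨p, hp, hxp, gauge_of_mem hp hxp⟩
  · exact .inr (gauge_of_not_mem h)

variable (t) in
lemma gauge_le_one : F.gauge x t ≤ 1 := by
  rcases F.gauge_eq_radialGauge_or_eq_one x with ⟨p, -, -, h⟩ | h
  · exact h ▸ radialGauge_le_one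
  · exact h ▸ le_rfl

lemma gauge_pos (ht : 0 < t) : 0 < F.gauge x t := by
  rcases F.gauge_eq_radialGauge_or_eq_one x with ⟨p, hp, -, h⟩ | h
  · exact h ▸ radialGauge_pos (F.radius_pos p hp) ht
  · exact h ▸ zero_lt_one

lemma gauge_mono : Monotone (F.gauge x) := by
  rcases F.gauge_eq_radialGauge_or_eq_one x with ⟨p, hp, -, h⟩ | h
  · exact h ▸ radialGauge_mono (F.radius_pos p hp).le
  · exact h ▸ monotone_const

lemma continuous_gauge : Continuous (F.gauge x) := by
  rcases F.gauge_eq_radialGauge_or_eq_one x with ⟨p, -, -, h⟩ | h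
  · exact h ▸ continuous_radialGauge
  · exact h ▸ continuous_const

lemma gauge_zero_nonneg : 0 ≤ F.gauge x 0 :=
  ge_of_tendsto ((F.continuous_gauge x).tendsto 0 |>.mono_left nhdsWithin_le_nhds)
    (eventually_nhdsWithin_of_forall (s := Ioi 0) fun _ ht => (F.gauge_pos x ht).le)

variable {F x}

lemma gauge_le_mul (hs : 0 ≤ s) (ht : 0 < t) : F.gauge x s ≤ (1 + s / t) * F.gauge x t := by
  rcases F.gauge_eq_radialGauge_or_eq_one x with ⟨p, hp, -, h⟩ | h
  · exact h ▸ radialGauge_le_mul (F.radius_pos p hp) hs ht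
  · simp only [h, Pi.one_apply, mul_one]
    exact le_add_of_nonneg_right (by positivity)

/-- A Harnack inequality for the infinitesimal gauge on balls away from the centers. -/
lemma gauge_zero_le_three_mul {x₀ y : X} (h : ∀ p ∈ F.centers, 2 * r < dist x₀ p)
    (hx : x ∈ ball x₀ r) (hy : y ∈ ball x₀ r) : F.gauge y 0 ≤ 3 * F.gauge x 0 := by
  rw [mem_ball] at hx hy
  by_cases hxp : ∃ p ∈ F.centers, dist x p < F.radius p
  · obtain ⟨p, hp, hxp⟩ := hxp
    have hpos := F.radius_pos p hp
    have hyx : dist y p ≤ 3 * dist x p := by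
      have := dist_triangle4 y x₀ x p
      rw [dist_comm x₀ x] at this
      linarith [h p hp, dist_triangle_left x₀ p x]
    rw [gauge_of_mem hp hxp, radialGauge, add_zero, min_eq_right ((div_le_one hpos).2 hxp.le),
      ← mul_div_assoc]
    by_cases hyp : dist y p < F.radius p
    · rw [gauge_of_mem hp hyp, radialGauge, add_zero]
      exact (min_le_right _ _).trans (by gcongr)
    · exact (F.gauge_le_one y 0).trans ((one_le_div hpos).2 (by linarith))
  · rw [gauge_of_not_mem hxp, Pi.one_apply]
    linarith [F.gauge_le_one y 0]

end Gauge

section Map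

variable {V : Type*} [NormedAddCommGroup V] [NormedSpace ℝ V] (F : SeparatedBalls V)

open Classical in
/-- The map that performs the radial stretch in each ball of the family and is the identity
elsewhere. -/
def map (x : V) : V :=
  if h : ∃ p ∈ F.centers, dist x p < F.radius p then radialStretch h.choose (F.radius h.choose) x
  else x

variable {F} {x y p q : V}

lemma map_of_mem (hp : p ∈ F.centers) (hxp : dist x p < F.radius p) :
    F.map x = radialStretch p (F.radius p) x := by
  have h : ∃ p ∈ F.centers, dist x p < F.radius p := ⟨p, hp, hxp⟩
  rw [map, dif_pos h, F.center_unique hp h.choose_spec.1 hxp h.choose_spec.2]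

lemma map_of_not_mem (h : ¬∃ p ∈ F.centers, dist x p < F.radius p) : F.map x = x := by
  rw [map, dif_neg h]

lemma map_eq_radialStretch (hp : p ∈ F.centers)
    (h : ∀ q ∈ F.centers, q ≠ p → F.radius q ≤ dist x q) :
    F.map x = radialStretch p (F.radius p) x := by
  by_cases hx : dist x p < F.radius p
  · exact map_of_mem hp hx
  rw [radialStretch_of_le_dist (F.radius_pos p hp) (not_lt.1 hx)]
  refine map_of_not_mem ?_
  rintro ⟨q, hq, hxq⟩
  obtain rfl | hqp := eq_or_ne q p
  · exact hx hxq
  · exact (h q hq hqp).not_gt hxq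

lemma dist_map_self_le (hp : p ∈ F.centers) (hxp : dist x p < F.radius p) :
    dist (F.map x) x ≤ F.radius p / 4 := by
  rw [map_of_mem hp hxp]
  exact dist_radialStretch_self_le (F.radius_pos p hp) hxp.le

lemma dist_map_of_ne_center (hp : p ∈ F.centers) (hq : q ∈ F.centers) (hpq : p ≠ q)
    (hx : dist x p < F.radius p) (hy : dist y q < F.radius q) :
    F.radius p ≤ dist x y ∧ 3 / 4 * dist x y ≤ dist (F.map x) (F.map y) ∧
      dist (F.map x) (F.map y) ≤ 5 / 4 * dist x y := by
  have hsep := F.two_mul_radius_add_le_dist p hp q hq hpq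
  have hpq_le : dist p q ≤ dist x p + dist x y + dist y q := by
    simpa only [dist_comm p x] using dist_triangle4 p x y q
  have hmx := dist_map_self_le hp hx
  have hmy := dist_map_self_le hq hy
  have hq_pos := F.radius_pos q hq
  have h₁ := dist_triangle4 x (F.map x) (F.map y) y
  have h₂ := dist_triangle4 (F.map x) x y (F.map y)
  rw [dist_comm x (F.map x)] at h₁
  rw [dist_comm y (F.map y)] at h₂
  refine ⟨?_, ?_, ?_⟩ <;> linarith

lemma map_surjective : Function.Surjective F.map := by
  intro y
  by_cases hy : ∃ p ∈ F.centers, dist y p < F.radius p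
  · obtain ⟨p, hp, hyp⟩ := hy
    obtain ⟨x, hx, hxy⟩ := exists_radialStretch_eq (F.radius_pos p hp) hyp
    exact ⟨x, (map_of_mem hp hx).trans hxy⟩
  · exact ⟨y, map_of_not_mem hy⟩

end Map

section MapInner

variable {V : Type*} [NormedAddCommGroup V] [InnerProductSpace ℝ V] {F : SeparatedBalls V}
  {x y p : V}

lemma gauge_bounds_of_eq_radialStretch {r : ℝ} (hr : 0 < r)
    (hg : F.gauge x (dist x y) = radialGauge p r x (dist x y))
    (hx : F.map x = radialStretch p r x) (hy : F.map y = radialStretch p r y) :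
    F.gauge x (dist x y) * dist x y / 4 ≤ dist (F.map x) (F.map y) ∧
      dist (F.map x) (F.map y) ≤ 2 * F.gauge x (dist x y) * dist x y := by
  rw [hg, hx, hy]
  exact ⟨radialGauge_le_dist_radialStretch hr.le, dist_radialStretch_le_radialGauge hr.le⟩

variable (F x y) in
/-- All metric and infinitesimal properties of `F.map` are read off from this estimate. -/
lemma gauge_bounds :
    F.gauge x (dist x y) * dist x y / 4 ≤ dist (F.map x) (F.map y) ∧
      dist (F.map x) (F.map y) ≤ 2 * F.gauge x (dist x y) * dist x y := by
  have hd : 0 ≤ dist x y := dist_nonneg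
  by_cases hx : ∃ p ∈ F.centers, dist x p < F.radius p
  · obtain ⟨p, hp, hxp⟩ := hx
    by_cases hy : ∃ q ∈ F.centers, q ≠ p ∧ dist y q < F.radius q
    · obtain ⟨q, hq, hqp, hyq⟩ := hy
      obtain ⟨hpxy, hlower, hupper⟩ := dist_map_of_ne_center hp hq hqp.symm hxp hyq
      have hg : F.gauge x (dist x y) = 1 := by
        rw [gauge_of_mem hp hxp]
        exact min_eq_left ((one_le_div (F.radius_pos p hp)).2
          (by linarith [dist_nonneg (x := x) (y := p)]))
      rw [hg]
      constructor <;> linarith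
    · push Not at hy
      exact gauge_bounds_of_eq_radialStretch (F.radius_pos p hp)
        (congrFun (gauge_of_mem hp hxp) _) (map_of_mem hp hxp) (map_eq_radialStretch hp hy)
  · have hg : F.gauge x (dist x y) = 1 := congrFun (gauge_of_not_mem hx) _
    by_cases hy : ∃ q ∈ F.centers, dist y q < F.radius q
    · obtain ⟨q, hq, hyq⟩ := hy
      have hxq : F.radius q ≤ dist x q := not_lt.1 fun h => hx ⟨q, hq, h⟩
      refine gauge_bounds_of_eq_radialStretch (F.radius_pos q hq) ?_ ?_ (map_of_mem hq hyq)
      · rw [hg, radialGauge_of_le_dist (F.radius_pos q hq) hxq hd]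
      · rw [map_of_not_mem hx, radialStretch_of_le_dist (F.radius_pos q hq) hxq]
    · rw [hg, map_of_not_mem hx, map_of_not_mem hy]
      constructor <;> linarith

variable (F) in
lemma lipschitzWith_map : LipschitzWith 2 F.map := by
  refine LipschitzWith.of_dist_le_mul (α := V) (β := V) fun x y => ?_
  calc dist (F.map x) (F.map y) ≤ 2 * F.gauge x (dist x y) * dist x y := (F.gauge_bounds x y).2
    _ ≤ 2 * 1 * dist x y := by gcongr; exact F.gauge_le_one x _
    _ = _ := by norm_num

lemma gauge_mul_le_dist_map {δ : ℝ} (hδ : 0 < δ) (h : δ ≤ dist x y) :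
    F.gauge x δ * δ / 4 ≤ dist (F.map x) (F.map y) := by
  refine le_trans ?_ (F.gauge_bounds x y).1
  have hpos := (F.gauge_pos x (hδ.trans_le h)).le
  have hmono := F.gauge_mono x h
  gcongr

lemma map_injective : Function.Injective F.map := by
  intro x y h
  by_contra hne
  have hpos := dist_pos.2 hne
  have hle := gauge_mul_le_dist_map (F := F) hpos le_rfl
  have := F.gauge_pos x hpos
  rw [h, dist_self] at hle
  exact hle.not_gt (by positivity)

variable (F) in
/-- `F.map` as a homeomorphism. -/
def homeomorph : V ≃ₜ V where
  toEquiv := Equiv.ofBijective F.map ⟨map_injective, map_surjective⟩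
  continuous_toFun := F.lipschitzWith_map.continuous
  continuous_invFun := by
    set e := Equiv.ofBijective F.map ⟨map_injective, map_surjective⟩
    refine Metric.continuous_iff.2 fun b δ hδ =>
      ⟨F.gauge (e.symm b) δ * δ / 4, ?_, fun a ha => ?_⟩
    · have := F.gauge_pos (e.symm b) hδ
      positivity
    · by_contra! hle
      rw [dist_comm] at hle
      have hbound := gauge_mul_le_dist_map (F := F) hδ hle
      rw [show F.map (e.invFun b) = b from e.apply_symm_apply b,
        show F.map (e.invFun a) = a from e.apply_symm_apply a, dist_comm] at hbound
      exact hbound.not_gt ha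

lemma dist_map_le_mul_dist_map {a b : V} (hb : x ≠ b) :
    dist (F.map x) (F.map a)
      ≤ 8 * (dist x a / dist x b * (1 + dist x a / dist x b)) * dist (F.map x) (F.map b) := by
  have hpos : 0 < dist x b := dist_pos.2 hb
  set s := dist x a
  set t := dist x b
  calc dist (F.map x) (F.map a) ≤ 2 * F.gauge x s * s := (F.gauge_bounds x a).2
    _ ≤ 2 * ((1 + s / t) * F.gauge x t) * s := by
      gcongr
      exact gauge_le_mul dist_nonneg hpos
    _ = 8 * (s / t * (1 + s / t)) * (F.gauge x t * t / 4) := by field_simp; ring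
    _ ≤ 8 * (s / t * (1 + s / t)) * dist (F.map x) (F.map b) := by
      gcongr
      exact (F.gauge_bounds x b).1

end MapInner

end SeparatedBalls

/-- The distortion function `t ↦ 8 t (1 + t)` as an order isomorphism of `ℝ≥0`. -/
def quadraticDistortion : ℝ≥0 ≃o ℝ≥0 :=
  StrictMono.orderIsoOfSurjective (fun t => 8 * (t * (1 + t))) (fun a b h => by dsimp only; gcongr)
    fun y => mem_range_of_exists_le_of_exists_ge (by fun_prop) ⟨0, by simp⟩ ⟨y, by
      calc y = 1 * (y * 1) := by ring
        _ ≤ 8 * (y * (1 + y)) := by gcongr; exacts [by norm_num, le_self_add]⟩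

lemma SeparatedBalls.isQS_map {n : ℕ} (F : SeparatedBalls (Pt n)) :
    IsQS F.map quadraticDistortion := by
  intro x a b hb
  exact_mod_cast SeparatedBalls.dist_map_le_mul_dist_map (F := F) (a := a) hb

/-! ### Jacobians -/

section Jacobian

variable {V : Type*} [NormedAddCommGroup V] [NormedSpace ℝ V]

lemma mul_norm_le_of_hasFDerivAt {W : Type*} [NormedAddCommGroup W] [NormedSpace ℝ W] {f : V → W}
    {f' : V →L[ℝ] W} {x : V} {c : ℝ} (hf : HasFDerivAt f f' x)
    (h : ∀ᶠ y in 𝓝 x, c * ‖y - x‖ ≤ ‖f y - f x‖) (v : V) : c * ‖v‖ ≤ ‖f' v‖ := by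
  refine ge_of_tendsto (hf.hasLineDerivAt v).tendsto_slope_zero_right.norm ?_
  have hline : Tendsto (fun t : ℝ => x + t • v) (𝓝[>] 0) (𝓝 x) := by
    have : Continuous fun t : ℝ => x + t • v := by fun_prop
    simpa using (this.tendsto 0).mono_left nhdsWithin_le_nhds
  filter_upwards [hline.eventually h, self_mem_nhdsWithin] with t ht ht_pos
  rw [mem_Ioi] at ht_pos
  rw [add_sub_cancel_left, norm_smul, Real.norm_of_nonneg ht_pos.le] at ht
  rw [norm_smul, Real.norm_of_nonneg (inv_nonneg.2 ht_pos.le),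
    le_inv_mul_iff₀ ht_pos]
  linarith

variable [FiniteDimensional ℝ V]

lemma abs_det_le_pow {D : V →L[ℝ] V} {L : ℝ} (hL : 0 ≤ L) (h : ∀ v, ‖D v‖ ≤ L * ‖v‖) :
    |D.det| ≤ L ^ Module.finrank ℝ V := by
  borelize V
  let μ : Measure V := Measure.addHaar
  have himage : D '' closedBall 0 1 ⊆ closedBall 0 L := by
    rintro _ ⟨v, hv, rfl⟩
    rw [mem_closedBall_zero_iff] at *
    exact (h v).trans (mul_le_of_le_one_right hL hv)
  have hμ := measure_mono (μ := μ) himage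
  rwa [Measure.addHaar_image_continuousLinearMap, Measure.addHaar_closedBall _ _ hL,
    Measure.addHaar_closedBall _ _ zero_le_one, one_pow, ENNReal.ofReal_one, one_mul,
    ENNReal.mul_le_mul_iff_left (measure_ball_pos _ _ one_pos).ne' measure_ball_lt_top.ne,
    ENNReal.ofReal_le_ofReal_iff (by positivity)] at hμ

lemma pow_le_abs_det_of_pos {D : V →L[ℝ] V} {l : ℝ} (hl : 0 < l) (h : ∀ v, l * ‖v‖ ≤ ‖D v‖) :
    l ^ Module.finrank ℝ V ≤ |D.det| := by
  have hinj : Function.Injective (D : V →ₗ[ℝ] V) := by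
    refine (injective_iff_map_eq_zero _).2 fun v hv => norm_le_zero_iff.1 ?_
    have := h v
    rw [show D v = 0 from hv, norm_zero] at this
    exact nonpos_of_mul_nonpos_right this hl
  let e : V ≃ₗ[ℝ] V := LinearEquiv.ofInjectiveEndo _ hinj
  have hsymm : |(LinearMap.toContinuousLinearMap (e.symm : V →ₗ[ℝ] V)).det|
      ≤ l⁻¹ ^ Module.finrank ℝ V := by
    refine abs_det_le_pow (inv_nonneg.2 hl.le) fun v => ?_
    rw [le_inv_mul_iff₀ hl]
    refine (h (e.symm v)).trans_eq ?_
    congr 1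
    exact e.apply_symm_apply v
  have hmul : |D.det| * |LinearMap.det (e.symm : V →ₗ[ℝ] V)| = 1 := by
    rw [← abs_mul, show D.det = LinearMap.det (e : V →ₗ[ℝ] V) from rfl, e.det_mul_det_symm, abs_one]
  rw [inv_pow] at hsymm
  calc l ^ Module.finrank ℝ V
      = |D.det| * |LinearMap.det (e.symm : V →ₗ[ℝ] V)| * l ^ Module.finrank ℝ V := by
        rw [hmul, one_mul]
    _ ≤ |D.det| * (l ^ Module.finrank ℝ V)⁻¹ * l ^ Module.finrank ℝ V := by gcongr; exact hsymm
    _ = |D.det| := by field_simp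

lemma pow_le_abs_det {D : V →L[ℝ] V} {l : ℝ} (hl : 0 ≤ l) (h : ∀ v, l * ‖v‖ ≤ ‖D v‖) :
    l ^ Module.finrank ℝ V ≤ |D.det| := by
  rcases hl.eq_or_lt with rfl | hl
  · rcases subsingleton_or_nontrivial V with hV | hV
    · simp [ContinuousLinearMap.det, LinearMap.det_eq_one_of_subsingleton,
        Module.finrank_zero_of_subsingleton]
    · simp [Module.finrank_pos.ne']
  · exact pow_le_abs_det_of_pos hl h

variable [MeasurableSpace V] [BorelSpace V] (μ : Measure V) [μ.IsAddHaarMeasure]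

lemma addHaar_image_eq_zero_of_lipschitzWith {f : V → V} {K : ℝ≥0} (hf : LipschitzWith K f)
    {s : Set V} (hs : μ s = 0) : μ (f '' s) = 0 := by
  have hμH : (Measure.hausdorffMeasure (Module.finrank ℝ V) : Measure V) s = 0 :=
    Measure.absolutelyContinuous_isAddHaarMeasure _ μ hs
  refine Measure.absolutelyContinuous_isAddHaarMeasure μ
    (Measure.hausdorffMeasure (Module.finrank ℝ V)) (le_antisymm ?_ zero_le)
  simpa [hμH] using hf.hausdorffMeasure_image_le (Nat.cast_nonneg (Module.finrank ℝ V)) s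

lemma lintegral_comp_mul_abs_det_fderiv {f : V ≃ₜ V} {K : ℝ≥0} (hf : LipschitzWith K f)
    (g : V → ℝ≥0∞) :
    ∫⁻ x, g (f x) * ENNReal.ofReal |(fderiv ℝ f x).det| ∂μ = ∫⁻ y, g y ∂μ := by
  set s := {x | DifferentiableAt ℝ f x}
  have hs : μ sᶜ = 0 := hf.ae_differentiableAt
  have hfs : μ (f '' s)ᶜ = 0 := by
    rw [← image_compl_eq f.bijective]
    exact addHaar_image_eq_zero_of_lipschitzWith μ hf hs
  have harea := lintegral_image_eq_lintegral_abs_det_fderiv_mul μ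
    (measurableSet_of_differentiableAt ℝ f)
    (fun x (hx : DifferentiableAt ℝ f x) => hx.hasFDerivAt.hasFDerivWithinAt) f.injective.injOn g
  rw [setLIntegral_congr (ae_eq_univ.2 hfs), setLIntegral_congr (ae_eq_univ.2 hs),
    Measure.restrict_univ] at harea
  simp only [harea, mul_comm]

end Jacobian

lemma jacobianCOV_of_lipschitzWith {n : ℕ} {f : Pt n ≃ₜ Pt n} {K : ℝ≥0} (hf : LipschitzWith K f) :
    JacobianCOV f fun x => |(fderiv ℝ f x).det| := by
  refine ⟨?_, fun g _ => lintegral_comp_mul_abs_det_fderiv volume hf g⟩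
  filter_upwards [hf.ae_differentiableAt] with x hx using ⟨_, hx.hasFDerivAt, rfl⟩

section Average

variable {X : Type*} [MeasurableSpace X] {ν : Measure X} [IsFiniteMeasure ν] [NeZero ν]
  {w : X → ℝ} {a b : ℝ}

lemma average_le_of_ae_nonneg_of_ae_le (h₀ : ∀ᵐ x ∂ν, 0 ≤ w x) (hb : ∀ᵐ x ∂ν, w x ≤ b) :
    ⨍ x, w x ∂ν ≤ b := by
  have hnorm := norm_integral_le_of_norm_le_const (μ := (ν univ)⁻¹ • ν) (f := w) (C := b)
    (Measure.ae_smul_measure (h₀.mp <| hb.mono fun x hb h₀ => by rwa [Real.norm_of_nonneg h₀]) _)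
  rw [probReal_univ, mul_one] at hnorm
  exact (le_abs_self _).trans hnorm

lemma average_le_mul_essInf {c : ℝ} (ha : 0 ≤ a) (hc : 0 ≤ c) (hw : ∀ᵐ x ∂ν, a ≤ w x)
    (hw' : ∀ᵐ x ∂ν, w x ≤ c * a) : ⨍ x, w x ∂ν ≤ c * essInf w ν := by
  have hinf : a ≤ essInf w ν :=
    le_essInf_of_ae_le _ hw (IsBoundedUnder.isCoboundedUnder_ge ⟨c * a, eventually_map.2 hw'⟩)
  exact (average_le_of_ae_nonneg_of_ae_le (hw.mono fun x hx => ha.trans hx) hw').trans (by gcongr)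

end Average

namespace SeparatedBalls

section Derivative

variable {V : Type*} [NormedAddCommGroup V] [InnerProductSpace ℝ V] {F : SeparatedBalls V} {x : V}

lemma norm_fderiv_map_le (hx : DifferentiableAt ℝ F.map x) :
    ‖fderiv ℝ F.map x‖ ≤ 2 * F.gauge x 0 := by
  refine le_of_forall_pos_le_add fun ε hε => hx.hasFDerivAt.le_of_lip'
    (by linarith [F.gauge_zero_nonneg x]) ?_
  have hlim : Tendsto (fun y => 2 * F.gauge x (dist x y)) (𝓝 x) (𝓝 (2 * F.gauge x 0)) := by
    have : Continuous fun y => 2 * F.gauge x (dist x y) := by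
      have := F.continuous_gauge x
      fun_prop
    simpa using this.tendsto x
  filter_upwards [hlim.eventually_le_const (lt_add_of_pos_right _ hε)] with y hy
  rw [← dist_eq_norm, ← dist_eq_norm, dist_comm, dist_comm y]
  exact (F.gauge_bounds x y).2.trans (by gcongr)

lemma mul_norm_le_norm_fderiv_map (hx : DifferentiableAt ℝ F.map x) (v : V) :
    F.gauge x 0 / 4 * ‖v‖ ≤ ‖fderiv ℝ F.map x v‖ := by
  refine mul_norm_le_of_hasFDerivAt hx.hasFDerivAt (Eventually.of_forall fun y => ?_) v
  rw [← dist_eq_norm, ← dist_eq_norm, dist_comm, dist_comm (F.map y), div_mul_eq_mul_div]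
  refine le_trans ?_ (F.gauge_bounds x y).1
  gcongr
  exact F.gauge_mono x dist_nonneg

variable [FiniteDimensional ℝ V]

lemma abs_det_fderiv_map_le (hx : DifferentiableAt ℝ F.map x) :
    |(fderiv ℝ F.map x).det| ≤ (2 * F.gauge x 0) ^ Module.finrank ℝ V :=
  abs_det_le_pow (by linarith [F.gauge_zero_nonneg x]) fun v =>
    (fderiv ℝ F.map x).le_of_opNorm_le (norm_fderiv_map_le hx) v

lemma le_abs_det_fderiv_map (hx : DifferentiableAt ℝ F.map x) :
    (F.gauge x 0 / 4) ^ Module.finrank ℝ V ≤ |(fderiv ℝ F.map x).det| :=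
  pow_le_abs_det (by linarith [F.gauge_zero_nonneg x]) (mul_norm_le_norm_fderiv_map hx)

end Derivative

lemma memA1_abs_det_fderiv_map {n : ℕ} {F : SeparatedBalls (Pt n)} {E : Set (Pt n)}
    (hE : F.centers ⊆ E) : MemA1 (fun x => |(fderiv ℝ F.map x).det|) E := by
  refine ⟨72 ^ n, by positivity, fun x₀ r hr hdist => ?_⟩
  have hcenters : ∀ p ∈ F.centers, 2 * r < dist x₀ p := by
    intro p hp
    have := hdist.trans_le (infEDist_le_edist_of_mem (hE hp))
    rwa [edist_dist, ENNReal.ofReal_lt_ofReal_iff_of_nonneg (by positivity)] at this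
  have hx₀ : x₀ ∈ ball x₀ r := mem_ball_self hr
  have hdiff : ∀ᵐ x ∂volume.restrict (ball x₀ r), DifferentiableAt ℝ F.map x :=
    ae_restrict_of_ae F.lipschitzWith_map.ae_differentiableAt
  have hmem : ∀ᵐ x ∂volume.restrict (ball x₀ r), x ∈ ball x₀ r := ae_restrict_mem measurableSet_ball
  have : IsFiniteMeasure (volume.restrict (ball x₀ r)) :=
    isFiniteMeasure_restrict.2 measure_ball_lt_top.ne
  have : NeZero (volume.restrict (ball x₀ r)) :=
    ⟨Measure.restrict_eq_zero.not.2 (measure_ball_pos _ _ hr).ne'⟩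
  refine average_le_mul_essInf (a := (F.gauge x₀ 0 / 12) ^ n) ?_ (by positivity) ?_ ?_
  · have := F.gauge_zero_nonneg x₀
    positivity
  · filter_upwards [hdiff, hmem] with x hx hxr
    refine le_trans ?_ (finrank_euclideanSpace_fin (𝕜 := ℝ) (n := n) ▸ le_abs_det_fderiv_map hx)
    have := F.gauge_zero_nonneg x₀
    gcongr ?_ ^ n
    linarith [gauge_zero_le_three_mul hcenters hxr hx₀]
  · filter_upwards [hdiff, hmem] with x hx hxr
    refine (finrank_euclideanSpace_fin (𝕜 := ℝ) (n := n) ▸ abs_det_fderiv_map_le hx).trans ?_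
    rw [← mul_pow]
    have := F.gauge_zero_nonneg x
    gcongr ?_ ^ n
    linarith [gauge_zero_le_three_mul hcenters hx₀ hxr]

end SeparatedBalls

/-! ### A Cantor set of midpoints on the line -/

/-- The parameters of a self-similar Cantor set in `[-halfLength, halfLength]` that is generated by
two contractions with the same ratio. -/
structure CantorParameters where
  /-- The contraction ratio. -/
  ratio : ℝ
  /-- The half-length of the initial interval, which is centered at `0`. -/
  halfLength : ℝ
  ratio_pos : 0 < ratio
  ratio_lt_half : ratio < 1 / 2
  halfLength_pos : 0 < halfLength

namespace CantorParameters

variable (P : CantorParameters) {k m : ℕ} {a b : ℝ} {s t : ℤˣ}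

/-- The similarity dimension, which solves `2 * ratio ^ dimension = 1`. -/
def dimension : ℝ := Real.logb P.ratio (1 / 2)

/-- Half the length of the middle interval removed in the first step. -/
def gap : ℝ := (1 - 2 * P.ratio) * P.halfLength

/-- The contraction onto the right-hand (`s = 1`) or left-hand (`s = -1`) subinterval. -/
def branch (s : ℤˣ) (x : ℝ) : ℝ := P.ratio * x + s * ((1 - P.ratio) * P.halfLength)

/-- The midpoints of the intervals of generation at most `k` of the Cantor construction. -/
def midpoints : ℕ → Finset ℝ
  | 0 => {0}
  | k + 1 => insert 0 (Finset.univ.biUnion fun s => (midpoints k).image (P.branch s))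

lemma ratio_lt_one : P.ratio < 1 := P.ratio_lt_half.trans (by norm_num)

lemma dimension_pos : 0 < P.dimension :=
  Real.logb_pos_of_base_lt_one P.ratio_pos P.ratio_lt_one (by norm_num) (by norm_num)

lemma gap_pos : 0 < P.gap := mul_pos (by linarith [P.ratio_lt_half]) P.halfLength_pos

lemma ratio_pow_rpow_dimension (k : ℕ) : (P.ratio ^ k) ^ P.dimension = (1 / 2) ^ k := by
  rw [← Real.rpow_natCast, ← Real.rpow_mul P.ratio_pos.le, mul_comm, Real.rpow_mul P.ratio_pos.le,
    dimension, Real.rpow_logb P.ratio_pos P.ratio_lt_one.ne (by norm_num), Real.rpow_natCast]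

variable {P}

lemma mem_midpoints_zero : b ∈ P.midpoints 0 ↔ b = 0 := by simp [midpoints]

lemma mem_midpoints_succ :
    b ∈ P.midpoints (k + 1) ↔ b = 0 ∨ ∃ s, ∃ a ∈ P.midpoints k, P.branch s a = b := by
  simp only [midpoints, Finset.mem_insert, Finset.mem_biUnion, Finset.mem_univ, true_and,
    Finset.mem_image]

lemma zero_mem_midpoints : (0 : ℝ) ∈ P.midpoints k := by
  cases k <;> simp [midpoints]

lemma branch_mem_midpoints (ha : a ∈ P.midpoints k) : P.branch s a ∈ P.midpoints (k + 1) :=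
  mem_midpoints_succ.2 (.inr ⟨s, a, ha, rfl⟩)

lemma eq_zero_or_exists_branch_eq (hb : b ∈ P.midpoints k) :
    b = 0 ∨ ∃ m < k, ∃ s, ∃ a ∈ P.midpoints m, P.branch s a = b := by
  cases k with
  | zero => exact .inl (mem_midpoints_zero.1 hb)
  | succ k => exact (mem_midpoints_succ.1 hb).imp_right fun h => ⟨k, k.lt_succ_self, h⟩

variable (P) in
lemma midpoints_mono : Monotone P.midpoints := by
  refine monotone_nat_of_le_succ fun k => ?_
  induction k with
  | zero => simp [midpoints]
  | succ k ih =>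
    intro b hb
    rcases mem_midpoints_succ.1 hb with rfl | ⟨s, a, ha, rfl⟩
    exacts [zero_mem_midpoints, branch_mem_midpoints (ih ha)]

lemma abs_sign_mul (s : ℤˣ) (x : ℝ) : |s * x| = |x| := by
  rcases Int.units_eq_one_or s with rfl | rfl <;> simp

variable (P) in
lemma sign_mul_branch (s : ℤˣ) (x : ℝ) :
    s * P.branch s x = P.ratio * (s * x) + (1 - P.ratio) * P.halfLength := by
  rcases Int.units_eq_one_or s with rfl | rfl <;> push_cast [branch] <;> ring

variable (P) in
lemma branch_sub_branch (s : ℤˣ) (x y : ℝ) : P.branch s x - P.branch s y = P.ratio * (x - y) := by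
  simp only [branch]
  ring

variable (P) in
lemma abs_branch_sub_branch (s : ℤˣ) (x y : ℝ) :
    |P.branch s x - P.branch s y| = P.ratio * |x - y| := by
  rw [branch_sub_branch, abs_mul, abs_of_pos P.ratio_pos]

variable (P s) in
lemma branch_injective : Function.Injective (P.branch s) := fun x y h => by
  have := P.branch_sub_branch s x y
  rw [h, sub_self, zero_eq_mul, or_iff_right P.ratio_pos.ne'] at this
  exact sub_eq_zero.1 this

lemma abs_le_halfLength (hb : b ∈ P.midpoints k) : |b| ≤ P.halfLength := by
  induction k generalizing b with
  | zero => simpa [mem_midpoints_zero.1 hb] using P.halfLength_pos.le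
  | succ k ih =>
    rcases mem_midpoints_succ.1 hb with rfl | ⟨s, a, ha, rfl⟩
    · simpa using P.halfLength_pos.le
    have hsa := ih ha
    rw [← abs_sign_mul s, abs_le] at hsa
    rw [← abs_sign_mul s, sign_mul_branch, abs_le]
    constructor <;> nlinarith [P.ratio_pos, P.ratio_lt_half, P.halfLength_pos]

lemma gap_le_sign_mul_branch (ha : a ∈ P.midpoints k) : P.gap ≤ s * P.branch s a := by
  have hsa := abs_le_halfLength ha
  rw [← abs_sign_mul s, abs_le] at hsa
  rw [sign_mul_branch, gap]
  nlinarith [P.ratio_pos]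

lemma gap_le_abs (hb : b ∈ P.midpoints k) (hb₀ : b ≠ 0) : P.gap ≤ |b| := by
  obtain rfl | ⟨m, -, s, a, ha, rfl⟩ := eq_zero_or_exists_branch_eq hb
  · exact absurd rfl hb₀
  · rw [← abs_sign_mul s]
    exact (gap_le_sign_mul_branch ha).trans (le_abs_self _)

lemma gap_le_abs_branch_sub_branch (ha : a ∈ P.midpoints k) (hb : b ∈ P.midpoints m)
    (hst : s ≠ t) : P.gap ≤ |P.branch s a - P.branch t b| := by
  obtain rfl : t = -s := by
    rcases Int.units_eq_one_or s with rfl | rfl <;>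
      rcases Int.units_eq_one_or t with rfl | rfl <;> simp_all
  have hsa := gap_le_sign_mul_branch (s := s) ha
  have hsb := gap_le_sign_mul_branch (s := -s) hb
  rw [← abs_sign_mul s]
  refine le_trans ?_ (le_abs_self _)
  push_cast at hsb
  linarith [P.gap_pos]

lemma gap_mul_pow_le_abs_sub (ha : a ∈ P.midpoints k) (hb : b ∈ P.midpoints m) (hab : a ≠ b) :
    P.gap * P.ratio ^ k ≤ |a - b| := by
  have gap_mul_le : ∀ {j : ℕ} {c : ℝ}, P.gap ≤ c → P.gap * P.ratio ^ j ≤ c := fun h =>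
    (mul_le_of_le_one_right P.gap_pos.le
      (pow_le_one₀ P.ratio_pos.le P.ratio_lt_one.le)).trans h
  induction k generalizing a b m with
  | zero =>
    rw [mem_midpoints_zero.1 ha, zero_sub, abs_neg]
    exact gap_mul_le (gap_le_abs hb fun h => hab ((mem_midpoints_zero.1 ha).trans h.symm))
  | succ k ih =>
    rcases mem_midpoints_succ.1 ha with rfl | ⟨s, c, hc, rfl⟩
    · rw [zero_sub, abs_neg]
      exact gap_mul_le (gap_le_abs hb hab.symm)
    obtain rfl | ⟨m, -, t, d, hd, rfl⟩ := eq_zero_or_exists_branch_eq hb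
    · rw [sub_zero]
      exact gap_mul_le (gap_le_abs ha hab)
    obtain rfl | hst := eq_or_ne s t
    · rw [abs_branch_sub_branch, pow_succ', mul_left_comm]
      exact mul_le_mul_of_nonneg_left (ih hc hd (ne_of_apply_ne _ hab)) P.ratio_pos.le
    · exact gap_mul_le (gap_le_abs_branch_sub_branch hc hd hst)

variable (P) in
lemma card_midpoints (k : ℕ) : (P.midpoints k).card + 1 = 2 ^ (k + 1) := by
  induction k with
  | zero => simp [midpoints]
  | succ k ih =>
    have hzero : 0 ∉ Finset.univ.biUnion fun s => (P.midpoints k).image (P.branch s) := by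
      simp only [Finset.mem_biUnion, Finset.mem_univ, true_and, Finset.mem_image]
      rintro ⟨s, a, ha, h⟩
      have := gap_le_sign_mul_branch (s := s) ha
      rw [h, mul_zero] at this
      exact this.not_gt P.gap_pos
    have hdisjoint : ∀ s ∈ Finset.univ, ∀ t ∈ Finset.univ, s ≠ t →
        Disjoint ((P.midpoints k).image (P.branch s)) ((P.midpoints k).image (P.branch t)) := by
      refine fun s _ t _ hst => Finset.disjoint_left.2 fun x hs ht => ?_
      obtain ⟨a, ha, rfl⟩ := Finset.mem_image.1 hs
      obtain ⟨b, hb, hba⟩ := Finset.mem_image.1 ht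
      have := gap_le_abs_branch_sub_branch ha hb hst
      rw [hba, sub_self, abs_zero] at this
      exact this.not_gt P.gap_pos
    rw [midpoints, Finset.card_insert_of_notMem hzero, Finset.card_biUnion hdisjoint]
    simp only [Finset.card_image_of_injective _ (P.branch_injective _), Finset.sum_const,
      Finset.card_univ, Fintype.card_units_int, smul_eq_mul]
    rw [pow_succ, ← ih]
    ring

lemma exists_abs_sub_le (hb : b ∈ P.midpoints m) (k : ℕ) :
    ∃ a ∈ P.midpoints k, |a - b| ≤ P.ratio ^ k * P.halfLength := by
  have hpos := P.halfLength_pos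
  have hratio := P.ratio_pos
  induction k generalizing m b with
  | zero => exact ⟨0, zero_mem_midpoints, by simpa using abs_le_halfLength hb⟩
  | succ k ih =>
    obtain rfl | ⟨m, -, s, c, hc, rfl⟩ := eq_zero_or_exists_branch_eq hb
    · refine ⟨0, zero_mem_midpoints, ?_⟩
      rw [sub_self, abs_zero]
      positivity
    · obtain ⟨a, ha, hac⟩ := ih hc
      refine ⟨P.branch s a, branch_mem_midpoints ha, ?_⟩
      rw [abs_branch_sub_branch, pow_succ', mul_assoc]
      gcongr

/-- Points within less than the gap of each other belong to a single branch. -/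
lemma exists_image_branch_eq {S : Finset ℝ} {L : ℝ} (hS : S ⊆ P.midpoints (k + 1))
    (hL : ∀ x ∈ S, ∀ y ∈ S, |x - y| ≤ L) (hgap : L < P.gap) (hS₀ : ¬ S ⊆ {0}) :
    ∃ s, ∃ T ⊆ P.midpoints k, T.image (P.branch s) = S := by
  obtain ⟨x, hxS, hx₀⟩ := Finset.not_subset.1 hS₀
  rw [Finset.mem_singleton] at hx₀
  obtain rfl | ⟨s, a, ha, rfl⟩ := mem_midpoints_succ.1 (hS hxS)
  · exact absurd rfl hx₀
  refine ⟨s, Finset.subset_image_iff.1 fun y hyS => ?_⟩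
  have hxy := (hL _ hxS y hyS).trans_lt hgap
  obtain rfl | ⟨t, b, hb, rfl⟩ := mem_midpoints_succ.1 (hS hyS)
  · rw [sub_zero] at hxy
    exact absurd (gap_le_abs (hS hxS) hx₀) hxy.not_ge
  · obtain rfl : s = t := by
      by_contra hst
      exact hxy.not_ge (gap_le_abs_branch_sub_branch ha hb hst)
    exact Finset.mem_image_of_mem _ hb

lemma card_midpoints_le_mul_rpow {L : ℝ} (hL : P.gap ≤ L) (k : ℕ) :
    ((P.midpoints k).card : ℝ) ≤ 2 * (L / (P.gap * P.ratio ^ k)) ^ P.dimension := by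
  have hgap := P.gap_pos
  have hratio := P.ratio_pos
  have hdim := P.dimension_pos.le
  have hcard : (P.midpoints k).card ≤ 2 ^ (k + 1) := by
    have := P.card_midpoints k
    omega
  calc ((P.midpoints k).card : ℝ) ≤ 2 ^ (k + 1) := by exact_mod_cast hcard
    _ = 2 * (1 / P.ratio ^ k) ^ P.dimension := by
      rw [Real.div_rpow zero_le_one (by positivity), P.ratio_pow_rpow_dimension, Real.one_rpow,
        one_div, one_div, inv_pow, inv_inv, pow_succ']
    _ ≤ 2 * (L / (P.gap * P.ratio ^ k)) ^ P.dimension := by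
      gcongr 2 * ?_ ^ _
      rw [div_le_div_iff₀ (by positivity) (by positivity), one_mul]
      gcongr

lemma card_le_of_subset_midpoints {S : Finset ℝ} {L : ℝ} (hS : S ⊆ P.midpoints k)
    (hL : ∀ x ∈ S, ∀ y ∈ S, |x - y| ≤ L) :
    (S.card : ℝ) ≤ max 1 (2 * (L / (P.gap * P.ratio ^ k)) ^ P.dimension) := by
  induction k generalizing S L with
  | zero => exact le_max_of_le_left (by exact_mod_cast Finset.card_le_card hS)
  | succ k ih =>
    rcases le_or_gt P.gap L with hgap | hgap
    · refine le_max_of_le_right (le_trans ?_ (card_midpoints_le_mul_rpow hgap (k + 1)))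
      exact_mod_cast Finset.card_le_card hS
    by_cases hS₀ : S ⊆ {0}
    · exact le_max_of_le_left (by exact_mod_cast Finset.card_le_card hS₀)
    obtain ⟨s, T, hT, rfl⟩ := exists_image_branch_eq hS hL hgap hS₀
    have hrescale : L / P.ratio / (P.gap * P.ratio ^ k) = L / (P.gap * P.ratio ^ (k + 1)) := by
      rw [div_div, pow_succ', mul_left_comm]
    rw [Finset.card_image_of_injective _ (P.branch_injective s), ← hrescale]
    refine ih hT fun x hx y hy => ?_
    rw [le_div_iff₀' P.ratio_pos, ← P.abs_branch_sub_branch s]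
    exact hL _ (Finset.mem_image_of_mem _ hx) _ (Finset.mem_image_of_mem _ hy)

lemma exists_dimension_eq {d h : ℝ} (hd : d ∈ Ioo (0 : ℝ) 1) (hh : 0 < h) :
    ∃ P : CantorParameters, P.dimension = d ∧ P.halfLength = h := by
  have hratio : (1 / 2 : ℝ) ^ (1 / d) < 1 / 2 := by
    conv_rhs => rw [← Real.rpow_one (1 / 2)]
    exact Real.rpow_lt_rpow_of_exponent_gt (by norm_num) (by norm_num) (one_lt_one_div hd.1 hd.2)
  refine ⟨⟨(1 / 2) ^ (1 / d), h, by positivity, hratio, hh⟩, ?_, rfl⟩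
  have := hd.1.ne'
  rw [dimension, Real.logb, Real.log_rpow (by norm_num)]
  field_simp [Real.log_ne_zero]

end CantorParameters

/-! ### Covering numbers and local dimension -/

section Covering

variable {n : ℕ} {E : Set (Pt n)} {x₀ : Pt n} {r R N C D : ℝ}

lemma abs_apply_sub_apply_le_dist (x y : Pt n) (i : Fin n) : |x i - y i| ≤ dist x y := by
  rw [dist_eq_norm]
  exact PiLp.norm_apply_le (x - y) i

lemma abs_apply_sub_apply_le_of_mem_closedCube {c x y : Pt n} (hx : x ∈ closedCube c r)
    (hy : y ∈ closedCube c r) (i : Fin n) : |x i - y i| ≤ r := by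
  rw [abs_le]
  constructor <;> linarith [hx i, hy i]

lemma Ncov_le_card {s : Finset (Pt n)} (hs : E ⊆ ⋃ c ∈ s, closedCube c r) : Ncov r E ≤ s.card :=
  Nat.sInf_le ⟨s, rfl, hs⟩

lemma card_le_Ncov {s G : Finset (Pt n)} (hs : E ⊆ ⋃ c ∈ s, closedCube c r) (hG : ↑G ⊆ E)
    (hsep : ∀ p ∈ G, ∀ q ∈ G, p ≠ q → ∃ i, r < |p i - q i|) : G.card ≤ Ncov r E := by
  have hcovers : {m : ℕ | ∃ s : Finset (Pt n), s.card = m ∧ E ⊆ ⋃ c ∈ s, closedCube c r}.Nonempty :=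
    ⟨_, s, rfl, hs⟩
  obtain ⟨t, ht, hcov⟩ := Nat.sInf_mem hcovers
  have hcube : ∀ p ∈ G, ∃ c ∈ t, p ∈ closedCube c r := fun p hp => by simpa using hcov (hG hp)
  choose! c hct hpc using hcube
  refine (Finset.card_le_card_of_injOn c hct fun p hp q hq hpq => ?_).trans_eq ht
  by_contra hne
  obtain ⟨i, hi⟩ := hsep p hp q hq hne
  exact hi.not_ge (abs_apply_sub_apply_le_of_mem_closedCube (hpc p hp) (hpq ▸ hpc q hq) i)

lemma log_natCast_le {m : ℕ} {a : ℝ} (ha : 1 ≤ a) (hm : m ≤ a) : Real.log m ≤ Real.log a := by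
  rcases m.eq_zero_or_pos with rfl | hm₀
  · simpa using Real.log_nonneg ha
  · exact Real.log_le_log (by exact_mod_cast hm₀) hm

lemma nonneg_of_mem_locRatios (hN : 1 ≤ N) (hr : 0 < r) {d : ℝ} (hd : d ∈ locRatios E N r R) :
    0 ≤ d := by
  obtain ⟨x, ρ, -, hNρ, -, rfl⟩ := hd
  refine div_nonneg (Real.log_natCast_nonneg _) (Real.log_nonneg ?_)
  rw [one_le_div hr]
  exact (le_mul_of_one_le_left hr.le hN).trans hNρ

lemma le_of_mem_locRatios (hC : 1 ≤ C) (hD : 0 ≤ D) (hN : 1 < N) (hr : 0 < r)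
    (hcov : ∀ x ρ, r ≤ ρ → (Ncov r (E ∩ ball x ρ) : ℝ) ≤ C * (ρ / r) ^ D) {d : ℝ}
    (hd : d ∈ locRatios E N r R) : d ≤ D + Real.log C / Real.log N := by
  obtain ⟨x, ρ, hρ, hNρ, -, rfl⟩ := hd
  have hNr : N ≤ ρ / r := (le_div_iff₀ hr).2 hNρ
  have hρr : 1 ≤ ρ / r := hN.le.trans hNr
  have hlogN : 0 < Real.log N := Real.log_pos hN
  have hlog : Real.log N ≤ Real.log (ρ / r) := Real.log_le_log (one_pos.trans hN) hNr
  have hlog_pos : 0 < Real.log (ρ / r) := hlogN.trans_le hlog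
  have hnum : Real.log (Ncov r (E ∩ ball x ρ)) ≤ Real.log C + D * Real.log (ρ / r) := by
    rw [← Real.log_rpow (one_pos.trans_le hρr), ← Real.log_mul (by positivity) (by positivity)]
    exact log_natCast_le (one_le_mul_of_one_le_of_one_le hC (Real.one_le_rpow hρr hD))
      (hcov x ρ ((one_le_div hr).1 hρr))
  calc Real.log (Ncov r (E ∩ ball x ρ)) / Real.log (ρ / r)
      ≤ (Real.log C + D * Real.log (ρ / r)) / Real.log (ρ / r) := by gcongr
    _ = D + Real.log C / Real.log (ρ / r) := by
      rw [add_div, mul_div_cancel_right₀ _ hlog_pos.ne', add_comm]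
    _ ≤ D + Real.log C / Real.log N := by
      gcongr
      exact Real.log_nonneg hC

lemma isBoundedUnder_sSup_locRatios (hN : 1 ≤ N) :
    IsBoundedUnder (· ≥ ·) (𝓝[>] 0) fun r => sSup (locRatios E N r R) :=
  isBoundedUnder_of_eventually_ge <| eventually_nhdsWithin_of_forall fun _ hr =>
    Real.sSup_nonneg fun _ hd => nonneg_of_mem_locRatios hN hr hd

lemma eventually_sSup_locRatios_le (hC : 1 ≤ C) (hD : 0 ≤ D) (hN : 1 < N)
    (hcov : ∀ᶠ r in 𝓝[>] 0,
      ∀ x ρ, r ≤ ρ → (Ncov r (E ∩ ball x ρ) : ℝ) ≤ C * (ρ / r) ^ D) :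
    ∀ᶠ r in 𝓝[>] 0, sSup (locRatios E N r R) ≤ D + Real.log C / Real.log N := by
  filter_upwards [hcov, self_mem_nhdsWithin] with r hr hr₀
  exact Real.sSup_le (fun d hd => le_of_mem_locRatios hC hD hN hr₀ hr hd)
    (add_nonneg hD (div_nonneg (Real.log_nonneg hC) (Real.log_nonneg hN.le)))

lemma frequently_le_sSup_locRatios {c ε : ℝ} (hC : 1 ≤ C) (hD : 0 ≤ D) (hN : 1 < N) (hc : 0 < c)
    (hε : 0 < ε) (hcov : ∀ᶠ r in 𝓝[>] 0,
      ∀ x ρ, r ≤ ρ → (Ncov r (E ∩ ball x ρ) : ℝ) ≤ C * (ρ / r) ^ D)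
    (hfreq : ∃ᶠ r in 𝓝[>] 0, c * r ^ (-D) ≤ Ncov r (E ∩ ball x₀ 1)) :
    ∃ᶠ r in 𝓝[>] 0, D - ε ≤ sSup (locRatios E N r 1) := by
  have hlim : Tendsto (fun r : ℝ => Real.log c / Real.log (1 / r)) (𝓝[>] 0)
      (𝓝 0) := by
    simp only [one_div]
    exact (Real.tendsto_log_atTop.comp tendsto_inv_nhdsGT_zero).const_div_atTop _
  have hsmall : ∀ᶠ r in 𝓝[>] (0 : ℝ), r ∈ Ioc 0 (1 / N) :=
    Ioc_mem_nhdsGT (by positivity)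
  refine (hfreq.and_eventually (hcov.and (hsmall.and (hlim.eventually
    (lt_mem_nhds (neg_lt_zero.2 hε)))))).mono fun r ⟨hle, hr, ⟨hr₀, hrN⟩, hlog⟩ => ?_
  have hNr : N * r ≤ 1 := (le_div_iff₀' (one_pos.trans hN)).1 hrN
  have hlog_pos : 0 < Real.log (1 / r) :=
    Real.log_pos ((one_lt_div hr₀).2 (lt_of_lt_of_le (lt_mul_of_one_lt_left hr₀ hN) hNr))
  refine le_csSup_of_le ⟨_, fun d hd => le_of_mem_locRatios hC hD hN hr₀ hr hd⟩
    ⟨x₀, 1, one_pos, hNr, le_rfl, rfl⟩ ?_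
  calc D - ε ≤ (Real.log c + D * Real.log (1 / r)) / Real.log (1 / r) := by
        rw [add_div, mul_div_cancel_right₀ _ hlog_pos.ne']
        linarith [hlog]
    _ = Real.log (c * r ^ (-D)) / Real.log (1 / r) := by
        rw [Real.log_mul hc.ne' (by positivity), Real.log_rpow hr₀, one_div, Real.log_inv]
        ring_nf
    _ ≤ Real.log (Ncov r (E ∩ ball x₀ 1)) / Real.log (1 / r) := by gcongr

theorem dimLoc_eq_of_Ncov {c : ℝ} (hC : 1 ≤ C) (hD : 0 ≤ D) (hc : 0 < c)
    (hcov : ∀ᶠ r in 𝓝[>] 0,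
      ∀ x ρ, r ≤ ρ → (Ncov r (E ∩ ball x ρ) : ℝ) ≤ C * (ρ / r) ^ D)
    (hfreq : ∃ᶠ r in 𝓝[>] 0, c * r ^ (-D) ≤ Ncov r (E ∩ ball x₀ 1)) :
    dimLoc E = D := by
  have hupper : Tendsto (fun N => D + Real.log C / Real.log N) atTop (𝓝 D) := by
    simpa using (Real.tendsto_log_atTop.const_div_atTop (Real.log C)).const_add D
  refine (tendsto_of_tendsto_of_tendsto_of_le_of_le' tendsto_const_nhds hupper ?_ ?_).liminf_eq
  · filter_upwards [eventually_gt_atTop 1] with N hN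
    refine le_of_forall_pos_sub_le fun ε hε => ?_
    exact le_limsup_of_frequently_le (frequently_le_sSup_locRatios hC hD hN hc hε hcov hfreq)
      (isBoundedUnder_of_eventually_le (eventually_sSup_locRatios_le hC hD hN hcov))
  · filter_upwards [eventually_gt_atTop 1] with N hN
    exact limsup_le_of_le (isBoundedUnder_sSup_locRatios hN.le).isCoboundedUnder_le
      (eventually_sSup_locRatios_le hC hD hN hcov)

end Covering

/-! ### Cantor dust -/

namespace CantorParameters

variable (P : CantorParameters) {n k m : ℕ} {p q : Pt n} {L R r : ℝ}

/-- The points of `ℝⁿ` all of whose coordinates are midpoints of generation at most `k`. -/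
def grid (n k : ℕ) : Finset (Pt n) :=
  (Fintype.piFinset fun _ : Fin n => P.midpoints k).map
    (WithLp.equiv 2 (Fin n → ℝ)).symm.toEmbedding

/-- The union of the grids of all generations: a countable stand-in, of the same dimension, for the
`n`-fold product of the Cantor set. -/
def dust (n : ℕ) : Set (Pt n) := ⋃ k, ↑(P.grid n k)

lemma ratio_pow_rpow_mul_dimension (n k : ℕ) :
    (P.ratio ^ k) ^ (n * P.dimension) = (1 / 2) ^ (n * k) := by
  rw [mul_comm, Real.rpow_mul (pow_nonneg P.ratio_pos.le k), ratio_pow_rpow_dimension,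
    Real.rpow_natCast, ← pow_mul, mul_comm]

variable {P}

lemma mem_grid : p ∈ P.grid n k ↔ ∀ i, p i ∈ P.midpoints k := by
  simp [grid, Finset.mem_map_equiv]

lemma mem_dust : p ∈ P.dust n ↔ ∃ k, p ∈ P.grid n k := by simp [dust]

lemma grid_subset_dust : ↑(P.grid n k) ⊆ P.dust n := subset_iUnion_of_subset k subset_rfl

lemma zero_mem_grid : 0 ∈ P.grid n k := mem_grid.2 fun _ => zero_mem_midpoints

variable (P) in
lemma grid_mono (n : ℕ) : Monotone (P.grid n) := fun _ _ hkm _ hp =>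
  mem_grid.2 fun i => P.midpoints_mono hkm (mem_grid.1 hp i)

variable (P) in
lemma card_grid (n k : ℕ) : (P.grid n k).card = (P.midpoints k).card ^ n := by simp [grid]

variable (P) in
lemma two_pow_le_card_grid (n k : ℕ) : 2 ^ (n * k) ≤ (P.grid n k).card := by
  rw [card_grid, mul_comm, pow_mul]
  have := P.card_midpoints k
  have := Nat.one_le_two_pow (n := k)
  exact Nat.pow_le_pow_left (by omega) n

variable (P) in
lemma card_grid_le_two_pow (n k : ℕ) : (P.grid n k).card ≤ 2 ^ (n * (k + 1)) := by
  rw [card_grid, mul_comm n, pow_mul]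
  have := P.card_midpoints k
  exact Nat.pow_le_pow_left (by omega) n

lemma exists_gap_mul_pow_le_abs_sub (hp : p ∈ P.grid n k) (hq : q ∈ P.grid n m) (hpq : p ≠ q) :
    ∃ i, P.gap * P.ratio ^ k ≤ |p i - q i| := by
  have hcoord : ∃ i, p i ≠ q i := not_forall.1 fun h => hpq (PiLp.ext h)
  exact hcoord.imp fun i => gap_mul_pow_le_abs_sub (mem_grid.1 hp i) (mem_grid.1 hq i)

lemma gap_mul_pow_le_dist (hp : p ∈ P.grid n k) (hq : q ∈ P.grid n m) (hpq : p ≠ q) :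
    P.gap * P.ratio ^ k ≤ dist p q :=
  let ⟨i, hi⟩ := exists_gap_mul_pow_le_abs_sub hp hq hpq
  hi.trans (abs_apply_sub_apply_le_dist p q i)

lemma norm_le_of_mem_dust (hp : p ∈ P.dust n) : ‖p‖ ≤ √n * P.halfLength := by
  obtain ⟨k, hk⟩ := mem_dust.1 hp
  rw [EuclideanSpace.norm_eq, ← Real.sqrt_sq P.halfLength_pos.le, ← Real.sqrt_mul (by positivity)]
  refine Real.sqrt_le_sqrt ?_
  calc ∑ i, ‖p i‖ ^ 2 ≤ ∑ _i : Fin n, P.halfLength ^ 2 := by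
        gcongr with i
        exact abs_le_halfLength (mem_grid.1 hk i)
    _ = n * P.halfLength ^ 2 := by simp

lemma card_le_of_subset_grid {S : Finset (Pt n)} (hL₀ : 0 ≤ L) (hS : S ⊆ P.grid n k)
    (hL : ∀ x ∈ S, ∀ y ∈ S, ∀ i, |x i - y i| ≤ L) :
    (S.card : ℝ) ≤ max 1 (2 ^ n * (L / (P.gap * P.ratio ^ k)) ^ (n * P.dimension)) := by
  have hgap := P.gap_pos
  have hratio := P.ratio_pos
  have hbox : S ⊆ (Fintype.piFinset fun i => S.image fun x => x i).map
      (WithLp.equiv 2 (Fin n → ℝ)).symm.toEmbedding := fun x hx => by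
    rw [Finset.mem_map_equiv, Fintype.mem_piFinset]
    exact fun i => Finset.mem_image_of_mem (fun y => y i) hx
  have hcard : ∀ i, ((S.image fun x => x i).card : ℝ) ≤
      max 1 (2 * (L / (P.gap * P.ratio ^ k)) ^ P.dimension) := fun i => by
    refine card_le_of_subset_midpoints
      (Finset.image_subset_iff.2 fun x hx => mem_grid.1 (hS hx) i) fun a ha b hb => ?_
    obtain ⟨x, hx, rfl⟩ := Finset.mem_image.1 ha
    obtain ⟨y, hy, rfl⟩ := Finset.mem_image.1 hb
    exact hL x hx y hy i
  calc (S.card : ℝ) ≤ ∏ i, ((S.image fun x => x i).card : ℝ) := by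
        have := Finset.card_le_card hbox
        rw [Finset.card_map, Fintype.card_piFinset] at this
        exact_mod_cast this
    _ ≤ max 1 (2 * (L / (P.gap * P.ratio ^ k)) ^ P.dimension) ^ n := by
        simpa using Finset.prod_le_prod (s := Finset.univ) (fun i _ => Nat.cast_nonneg _)
          fun i _ => hcard i
    _ = max (1 ^ n) ((2 * (L / (P.gap * P.ratio ^ k)) ^ P.dimension) ^ n) :=
        pow_left_monotoneOn.map_max (mem_ofPred.2 zero_le_one) (mem_ofPred.2 (by positivity))
    _ = max 1 (2 ^ n * (L / (P.gap * P.ratio ^ k)) ^ (n * P.dimension)) := by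
        rw [one_pow, mul_pow, mul_comm (n : ℝ), Real.rpow_mul (by positivity), Real.rpow_natCast]

lemma exists_mem_grid_abs_sub_le (hp : p ∈ P.dust n) (k : ℕ) :
    ∃ z ∈ P.grid n k, ∀ i, |z i - p i| ≤ P.ratio ^ k * P.halfLength := by
  obtain ⟨m, hm⟩ := mem_dust.1 hp
  choose a ha hap using fun i => exists_abs_sub_le (mem_grid.1 hm i) k
  exact ⟨(WithLp.equiv 2 (Fin n → ℝ)).symm a, mem_grid.2 ha, hap⟩

/-- The cubes of the cover are centered at the points of generation `k` near the ball. -/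
lemma exists_cover_of_scale (x : Pt n) (hR : 0 ≤ R) (hr : 2 * (P.ratio ^ k * P.halfLength) ≤ r) :
    ∃ s : Finset (Pt n), P.dust n ∩ ball x R ⊆ ⋃ c ∈ s, closedCube c r ∧
      (s.card : ℝ) ≤ max 1 (2 ^ n * (2 * (R + P.ratio ^ k * P.halfLength) /
        (P.gap * P.ratio ^ k)) ^ (n * P.dimension)) := by
  classical
  have hhalf := P.halfLength_pos
  have hratio := P.ratio_pos
  set e := P.ratio ^ k * P.halfLength
  have he : 0 < e := by positivity
  let S := {z ∈ P.grid n k | ∃ y ∈ ball x R, ∀ i, |z i - y i| ≤ e}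
  let corner : Pt n → Pt n := fun z => (WithLp.equiv 2 (Fin n → ℝ)).symm fun i => z i - e
  refine ⟨S.image corner, fun y hy => ?_, ?_⟩
  · obtain ⟨z, hz, hzy⟩ := exists_mem_grid_abs_sub_le hy.1 k
    refine mem_biUnion (Finset.mem_image_of_mem corner
      (Finset.mem_filter.2 ⟨hz, y, hy.2, hzy⟩)) fun i => ?_
    have hi := abs_le.1 (hzy i)
    change z i - e ≤ y i ∧ y i ≤ z i - e + r
    constructor <;> linarith
  · refine (Nat.cast_le.2 Finset.card_image_le).trans
      (card_le_of_subset_grid (by linarith [he]) (Finset.filter_subset _ _) fun z hz w hw i => ?_)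
    obtain ⟨-, y, hy, hzy⟩ := Finset.mem_filter.1 hz
    obtain ⟨-, v, hv, hwv⟩ := Finset.mem_filter.1 hw
    have hyx := abs_le.1 ((abs_apply_sub_apply_le_dist y x i).trans (mem_ball.1 hy).le)
    have hvx := abs_le.1 ((abs_apply_sub_apply_le_dist v x i).trans (mem_ball.1 hv).le)
    have hzyi := abs_le.1 (hzy i)
    have hwvi := abs_le.1 (hwv i)
    rw [abs_le]
    constructor <;> linarith

variable (P) in
lemma exists_cover (n : ℕ) : ∃ C : ℝ, 1 ≤ C ∧ ∀ (x : Pt n) {r R : ℝ}, 0 < r →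
    r ≤ 2 * P.halfLength → r ≤ R → ∃ s : Finset (Pt n),
      P.dust n ∩ ball x R ⊆ ⋃ c ∈ s, closedCube c r ∧
        (s.card : ℝ) ≤ C * (R / r) ^ (n * P.dimension) := by
  have hratio := P.ratio_pos
  have hhalf := P.halfLength_pos
  have hdim := P.dimension_pos
  have hone : 0 < 1 - 2 * P.ratio := by linarith [P.ratio_lt_half]
  set c := 6 / ((1 - 2 * P.ratio) * P.ratio)
  have hc : 1 ≤ c := (one_le_div (by positivity)).2 (by nlinarith)
  refine ⟨2 ^ n * c ^ (n * P.dimension), one_le_mul_of_one_le_of_one_le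
    (one_le_pow₀ one_le_two) (Real.one_le_rpow hc (by positivity)), fun x r R hr hr₂ hrR => ?_⟩
  obtain ⟨k, hk, hk'⟩ := exists_nat_pow_near_of_lt_one (x := r / (2 * P.halfLength))
    (by positivity) ((div_le_one (by positivity)).2 hr₂) P.ratio_pos P.ratio_lt_one
  rw [lt_div_iff₀ (by positivity)] at hk
  rw [div_le_iff₀ (by positivity)] at hk'
  obtain ⟨s, hs, hcard⟩ := exists_cover_of_scale (P := P) (k := k + 1) x (hr.le.trans hrR)
    (r := r) (by linarith)
  refine ⟨s, hs, hcard.trans (max_le ?_ ?_)⟩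
  · have hRr : 1 ≤ R / r := (one_le_div hr).2 hrR
    exact one_le_mul_of_one_le_of_one_le (one_le_mul_of_one_le_of_one_le
      (one_le_pow₀ one_le_two) (Real.one_le_rpow hc (by positivity)))
      (Real.one_le_rpow hRr (by positivity))
  · rw [mul_assoc, ← Real.mul_rpow (by positivity) (div_nonneg (hr.le.trans hrR) hr.le)]
    have hR : 0 < R := hr.trans_le hrR
    have hgap := P.gap_pos
    gcongr 2 ^ n * ?_ ^ _
    rw [div_mul_div_comm, div_le_div_iff₀ (by positivity) (by positivity), gap, pow_succ]
    calc 2 * (R + P.ratio ^ k * P.ratio * P.halfLength) * ((1 - 2 * P.ratio) * P.ratio * r)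
        ≤ 3 * R * ((1 - 2 * P.ratio) * P.ratio * (P.ratio ^ k * (2 * P.halfLength))) := by
          rw [pow_succ] at hk
          refine mul_le_mul (by linarith) ?_ (by positivity) (by positivity)
          gcongr
      _ = 6 * R * ((1 - 2 * P.ratio) * P.halfLength * (P.ratio ^ k * P.ratio)) := by ring

lemma two_pow_le_Ncov (hdust : P.dust n ⊆ ball 0 1) (hr : 0 < r) (hr₂ : r ≤ 2 * P.halfLength)
    (hr₁ : r ≤ 1) (hrk : r < P.gap * P.ratio ^ k) :
    2 ^ (n * k) ≤ Ncov r (P.dust n ∩ ball 0 1) := by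
  obtain ⟨C, -, hC⟩ := P.exists_cover n
  obtain ⟨s, hs, -⟩ := hC 0 hr hr₂ hr₁
  refine (P.two_pow_le_card_grid n k).trans (card_le_Ncov hs
    (subset_inter grid_subset_dust (grid_subset_dust.trans hdust)) fun p hp q hq hpq => ?_)
  exact (exists_gap_mul_pow_le_abs_sub hp hq hpq).imp fun i => hrk.trans_le

theorem dimLoc_dust (hdust : P.dust n ⊆ ball 0 1) : dimLoc (P.dust n) = n * P.dimension := by
  have hratio := P.ratio_pos
  have hgap := P.gap_pos
  have hsmall : ∀ c : ℝ, 0 < c → ∀ᶠ r in 𝓝[>] (0 : ℝ), r ∈ Ioc 0 c :=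
    fun c hc => Ioc_mem_nhdsGT hc
  have hhalf : 0 < 2 * P.halfLength := mul_pos two_pos P.halfLength_pos
  have hdim := P.dimension_pos.le
  obtain ⟨C, hC, hcover⟩ := P.exists_cover n
  refine dimLoc_eq_of_Ncov hC (by positivity) (c := (P.gap / 2) ^ (n * P.dimension))
    (by positivity) ?_ (x₀ := 0) ?_
  · filter_upwards [hsmall _ hhalf] with r hr x R hrR
    obtain ⟨s, hs, hcard⟩ := hcover x hr.1 hr.2 hrR
    exact (Nat.cast_le.2 (Ncov_le_card hs)).trans hcard
  · have hradius : Tendsto (fun k : ℕ => P.gap / 2 * P.ratio ^ k) atTop (𝓝[>] 0) :=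
      tendsto_nhdsWithin_iff.2 ⟨by simpa using
        (tendsto_pow_atTop_nhds_zero_of_lt_one hratio.le P.ratio_lt_one).const_mul (P.gap / 2),
        .of_forall fun k => mem_Ioi.2 (by positivity)⟩
    refine hradius.frequently (Eventually.frequently ?_)
    filter_upwards [hradius.eventually (hsmall _ hhalf), hradius.eventually (hsmall 1 one_pos)]
      with k hk hk'
    calc (P.gap / 2) ^ (n * P.dimension) * (P.gap / 2 * P.ratio ^ k) ^ (-(n * P.dimension))
        = 2 ^ (n * k) := by
          rw [Real.mul_rpow (by positivity) (by positivity), ← mul_assoc,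
            ← Real.rpow_add (by positivity), add_neg_cancel, Real.rpow_zero, one_mul,
            Real.rpow_neg (by positivity), ratio_pow_rpow_mul_dimension, one_div, inv_pow, inv_inv]
      _ ≤ Ncov (P.gap / 2 * P.ratio ^ k) (P.dust n ∩ ball 0 1) := by
          refine mod_cast two_pow_le_Ncov hdust hk.1 hk.2 hk'.2 ?_
          exact mul_lt_mul_of_pos_right (half_lt_self hgap) (by positivity)

end CantorParameters

/-! ### Energy estimates -/

section Energy

variable {n : ℕ} {α : ℝ}

/-- The integrand `|u(x) - u(y)|² / |x - y|^(n + 2α)` of the `Q_α`-norm. -/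
def energyDensity (α : ℝ) (u : Pt n → ℝ) (x y : Pt n) : ℝ≥0∞ :=
  ENNReal.ofReal (|u x - u y| ^ 2 / ‖x - y‖ ^ ((n : ℝ) + 2 * α))

/-- The double integral over `B × B` in the definition of the `Q_α`-norm. -/
def energy (α : ℝ) (u : Pt n → ℝ) (B : Set (Pt n)) : ℝ≥0∞ :=
  ∫⁻ x in B, ∫⁻ y in B, energyDensity α u x y

lemma le_Qnorm (u : Pt n → ℝ) (x : Pt n) {r : ℝ} (hr : 0 < r) :
    (ENNReal.ofReal (r ^ (2 * α - (n : ℝ))) * energy α u (ball x r)) ^ (1 / 2 : ℝ) ≤ Qnorm α u :=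
  le_iSup_of_le x (le_iSup_of_le r (le_iSup_of_le hr le_rfl))

lemma Qnorm_le {u : Pt n → ℝ} {M : ℝ≥0∞}
    (h : ∀ (x : Pt n) (r : ℝ), 0 < r →
      ENNReal.ofReal (r ^ (2 * α - (n : ℝ))) * energy α u (ball x r) ≤ M) :
    Qnorm α u ≤ M ^ (1 / 2 : ℝ) :=
  iSup_le fun x => iSup_le fun r => iSup_le fun hr =>
    ENNReal.rpow_le_rpow (h x r hr) (by norm_num)

/-- The kernel `min(1, |z|²/t²) / |z|^(n + 2α)`, which dominates the energy density of functions
that are `1/t`-Lipschitz with oscillation at most one. -/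
def truncatedKernel (α t : ℝ) (z : Pt n) : ℝ≥0∞ :=
  ENNReal.ofReal (min 1 (‖z‖ ^ 2 / t ^ 2) / ‖z‖ ^ ((n : ℝ) + 2 * α))

/-- The integral of the truncated kernel at scale one. -/
def truncatedMass (n : ℕ) (α : ℝ) : ℝ≥0∞ := ∫⁻ z : Pt n, truncatedKernel α 1 z

@[fun_prop]
lemma measurable_truncatedKernel (t : ℝ) : Measurable (truncatedKernel (n := n) α t) := by
  unfold truncatedKernel
  fun_prop

lemma integrableOn_pow_mul_min_div_rpow {d : ℕ} (hd : d ≠ 0) (hα₀ : 0 < α) (hα₁ : α < 1) :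
    IntegrableOn
      (fun y : ℝ => y ^ (d - 1) * (min 1 (y ^ 2 / 1 ^ 2) / y ^ ((d : ℝ) + 2 * α))) (Ioi 0) := by
  have hpow (y : ℝ) : y ^ (d - 1) = y ^ ((d : ℝ) - 1) := by
    rw [← Real.rpow_natCast, Nat.cast_pred (Nat.pos_of_ne_zero hd)]
  rw [← Ioc_union_Ioi_eq_Ioi zero_le_one]
  refine IntegrableOn.union ?_ ?_
  · have hint : IntegrableOn (fun y : ℝ => y ^ (1 - 2 * α)) (Ioc 0 1) :=
      (intervalIntegrable_iff_integrableOn_Ioc_of_le zero_le_one).1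
        (intervalIntegral.intervalIntegrable_rpow' (by linarith))
    refine hint.congr_fun (fun y hy => ?_) measurableSet_Ioc
    have hmin : min 1 (y ^ 2 / 1 ^ 2) = y ^ (2 : ℝ) := by
      simpa [abs_of_pos hy.1] using hy.2
    rw [hpow, hmin, ← Real.rpow_sub hy.1, ← Real.rpow_add hy.1]
    ring_nf
  · refine (integrableOn_Ioi_rpow_of_lt (a := -1 - 2 * α) (by linarith) one_pos).congr_fun
      (fun y (hy : 1 < y) => ?_) measurableSet_Ioi
    have hy₀ : 0 < y := one_pos.trans hy
    have hmin : min 1 (y ^ 2 / 1 ^ 2) = 1 := by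
      simpa [abs_of_pos hy₀] using hy.le
    rw [hpow, hmin, one_div, ← Real.rpow_neg hy₀.le, ← Real.rpow_add hy₀]
    ring_nf

lemma truncatedKernel_eq_mul {t : ℝ} (ht : 0 < t) (z : Pt n) :
    truncatedKernel α t z
      = ENNReal.ofReal (t ^ (-((n : ℝ) + 2 * α))) * truncatedKernel α 1 (t⁻¹ • z) := by
  unfold truncatedKernel
  rw [← ENNReal.ofReal_mul (by positivity), norm_smul, Real.norm_of_nonneg (by positivity),
    Real.mul_rpow (by positivity) (norm_nonneg z), Real.inv_rpow ht.le, Real.rpow_neg ht.le]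
  congr 1
  have : 0 < t ^ ((n : ℝ) + 2 * α) := by positivity
  field_simp

lemma lintegral_truncatedKernel {t : ℝ} (ht : 0 < t) :
    ∫⁻ z : Pt n, truncatedKernel α t z
      = ENNReal.ofReal (t ^ (-(2 * α))) * truncatedMass n α := by
  have hscale : ∫⁻ z : Pt n, truncatedKernel α 1 (t⁻¹ • z)
      = ENNReal.ofReal (t ^ n) * truncatedMass n α := by
    rw [← lintegral_map (measurable_truncatedKernel 1) (measurable_const_smul t⁻¹),
      Measure.map_addHaar_smul _ (inv_ne_zero ht.ne'), lintegral_smul_measure,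
      finrank_euclideanSpace_fin, inv_pow, inv_inv, abs_of_pos (by positivity)]
    rfl
  simp_rw [truncatedKernel_eq_mul ht]
  rw [lintegral_const_mul _ (by fun_prop), hscale, ← mul_assoc,
    ← ENNReal.ofReal_mul (by positivity), ← Real.rpow_natCast, ← Real.rpow_add ht]
  ring_nf

lemma setLIntegral_setLIntegral_comp_sub_le_left (A B : Set (Pt n)) (T : Pt n → ℝ≥0∞) :
    ∫⁻ x in A, ∫⁻ y in B, T (x - y) ≤ volume A * ∫⁻ z, T z :=
  calc ∫⁻ x in A, ∫⁻ y in B, T (x - y) ≤ ∫⁻ _ in A, ∫⁻ z, T z :=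
        lintegral_mono fun x =>
          (setLIntegral_le_lintegral _ _).trans_eq (lintegral_sub_left_eq_self T x)
    _ = volume A * ∫⁻ z, T z := by rw [setLIntegral_const, mul_comm]

lemma setLIntegral_setLIntegral_comp_sub_le_right (A B : Set (Pt n)) {T : Pt n → ℝ≥0∞}
    (hT : Measurable T) :
    ∫⁻ x in A, ∫⁻ y in B, T (x - y) ≤ volume B * ∫⁻ z, T z :=
  calc ∫⁻ x in A, ∫⁻ y in B, T (x - y) = ∫⁻ y in B, ∫⁻ x in A, T (x - y) :=
        lintegral_lintegral_swap (hT.comp measurable_sub).aemeasurable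
    _ ≤ ∫⁻ _ in B, ∫⁻ z, T z :=
        lintegral_mono fun y =>
          (setLIntegral_le_lintegral _ _).trans_eq (lintegral_sub_right_eq_self T y)
    _ = volume B * ∫⁻ z, T z := by rw [setLIntegral_const, mul_comm]

/-- Only pairs with at least one point in `W` contribute, and the inner integral at such a point
is at most the mass of the truncated kernel. -/
lemma energy_le {u : Pt n → ℝ} {B W : Set (Pt n)} (hB : MeasurableSet B) (hW : MeasurableSet W)
    {A t : ℝ} (hA : 0 ≤ A) (ht : 0 < t)
    (hu : ∀ x ∈ B, ∀ y ∈ B, |u x - u y| ^ 2 ≤ A * min 1 (‖x - y‖ ^ 2 / t ^ 2))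
    (hWu : ∀ x ∉ W, ∀ y ∉ W, u x = u y) :
    energy α u B ≤
      2 * (volume (B ∩ W) * (ENNReal.ofReal (A * t ^ (-(2 * α))) * truncatedMass n α)) := by
  set T : Pt n → ℝ≥0∞ := fun z => ENNReal.ofReal A * truncatedKernel α t z with hT
  have hTm : Measurable T := by fun_prop
  have hmass : ∫⁻ z, T z = ENNReal.ofReal (A * t ^ (-(2 * α))) * truncatedMass n α := by
    rw [hT, lintegral_const_mul _ (by fun_prop), lintegral_truncatedKernel ht,
      ENNReal.ofReal_mul hA, mul_assoc]
  have hle : ∀ x ∈ B, ∀ y ∈ B, energyDensity α u x y ≤ T (x - y) := by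
    intro x hx y hy
    simp only [hT, truncatedKernel, energyDensity]
    rw [← ENNReal.ofReal_mul hA, ← mul_div_assoc]
    gcongr
    exact hu x hx y hy
  have hzero : ∀ x ∉ W, ∫⁻ y in B \ W, energyDensity α u x y = 0 := fun x hx =>
    (setLIntegral_congr_fun (hB.diff hW) fun y hy => by
      simp [energyDensity, hWu x hx y hy.2]).trans lintegral_zero
  have hinner : ∀ x ∈ B \ W, ∫⁻ y in B, energyDensity α u x y ≤ ∫⁻ y in B ∩ W, T (x - y) := by
    intro x hx
    rw [← lintegral_inter_add_sdiff _ B hW, hzero x hx.2, add_zero]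
    exact setLIntegral_mono' (hB.inter hW) fun y hy => hle x hx.1 y hy.1
  calc energy α u B
      = (∫⁻ x in B ∩ W, ∫⁻ y in B, energyDensity α u x y)
          + ∫⁻ x in B \ W, ∫⁻ y in B, energyDensity α u x y :=
        (lintegral_inter_add_sdiff _ B hW).symm
    _ ≤ (∫⁻ x in B ∩ W, ∫⁻ y in B, T (x - y)) + ∫⁻ x in B \ W, ∫⁻ y in B ∩ W, T (x - y) :=
        add_le_add
          (setLIntegral_mono' (hB.inter hW) fun x hx => setLIntegral_mono' hB (hle x hx.1))
          (setLIntegral_mono' (hB.diff hW) hinner)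
    _ ≤ volume (B ∩ W) * (∫⁻ z, T z) + volume (B ∩ W) * ∫⁻ z, T z :=
        add_le_add (setLIntegral_setLIntegral_comp_sub_le_left _ _ T)
          (setLIntegral_setLIntegral_comp_sub_le_right _ _ hTm)
    _ = _ := by rw [hmass, ← two_mul]

lemma ofReal_rpow_mul_energy_le {u : Pt n → ℝ} {x : Pt n} {W : Set (Pt n)} {r : ℝ} (hr : 0 < r)
    (hW : MeasurableSet W) {A N t : ℝ} (hA : 0 ≤ A) (hN : 0 ≤ N) (ht : 0 < t)
    (hu : ∀ y ∈ ball x r, ∀ z ∈ ball x r, |u y - u z| ^ 2 ≤ A * min 1 (‖y - z‖ ^ 2 / t ^ 2))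
    (hWu : ∀ y ∉ W, ∀ z ∉ W, u y = u z)
    (hvol : volume (ball x r ∩ W) ≤ ENNReal.ofReal N * volume (ball (0 : Pt n) 1)) :
    ENNReal.ofReal (r ^ (2 * α - (n : ℝ))) * energy α u (ball x r)
      ≤ ENNReal.ofReal (2 * (r ^ (2 * α - (n : ℝ)) * N * (A * t ^ (-(2 * α))))) *
          (volume (ball (0 : Pt n) 1) * truncatedMass n α) :=
  calc ENNReal.ofReal (r ^ (2 * α - (n : ℝ))) * energy α u (ball x r)
      ≤ ENNReal.ofReal (r ^ (2 * α - (n : ℝ))) *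
          (2 * (ENNReal.ofReal N * volume (ball (0 : Pt n) 1) *
            (ENNReal.ofReal (A * t ^ (-(2 * α))) * truncatedMass n α))) := by
        gcongr
        exact (energy_le measurableSet_ball hW hA ht hu hWu).trans (by gcongr)
    _ = _ := by
        rw [ENNReal.ofReal_mul zero_le_two, ENNReal.ofReal_mul (p := _ * N) (by positivity),
          ENNReal.ofReal_mul (p := r ^ _) (by positivity), ENNReal.ofReal_ofNat]
        ring

lemma ofReal_mul_volume_mul_volume_le (hα : 0 ≤ α) {u : Pt n → ℝ} {A A' : Set (Pt n)} {h d : ℝ}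
    (hA : MeasurableSet A) (hA' : MeasurableSet A') (hh : 0 < h)
    (hu : ∀ x ∈ A, ∀ y ∈ A', h ≤ |u x - u y|) (hd : ∀ x ∈ A, ∀ y ∈ A', dist x y ≤ d) :
    ENNReal.ofReal (h ^ 2 / d ^ ((n : ℝ) + 2 * α)) * (volume A * volume A')
      ≤ ∫⁻ x in A, ∫⁻ y in A', energyDensity α u x y :=
  calc ENNReal.ofReal (h ^ 2 / d ^ ((n : ℝ) + 2 * α)) * (volume A * volume A')
      = ∫⁻ _ in A, ∫⁻ _ in A', ENNReal.ofReal (h ^ 2 / d ^ ((n : ℝ) + 2 * α)) := by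
        rw [setLIntegral_const, setLIntegral_const]
        ring
    _ ≤ ∫⁻ x in A, ∫⁻ y in A', energyDensity α u x y := by
        refine setLIntegral_mono' hA fun x hx => setLIntegral_mono' hA' fun y hy => ?_
        have hxy : x ≠ y := by
          rintro rfl
          simpa using hh.trans_le (hu x hx x hy)
        have hpos : 0 < ‖x - y‖ := norm_sub_pos_iff.2 hxy
        have hle : ‖x - y‖ ≤ d := (dist_eq_norm x y).ge.trans (hd x hx y hy)
        unfold energyDensity
        gcongr
        exact hu x hx y hy

section NeZero

variable [NeZero n]

lemma truncatedMass_lt_top (hα₀ : 0 < α) (hα₁ : α < 1) : truncatedMass n α < ⊤ := by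
  refine Integrable.lintegral_lt_top ((integrable_fun_norm_addHaar (E := Pt n) volume
    (f := fun y => min 1 (y ^ 2 / 1 ^ 2) / y ^ ((n : ℝ) + 2 * α))).2 ?_)
  simpa only [finrank_euclideanSpace_fin, smul_eq_mul]
    using integrableOn_pow_mul_min_div_rpow (NeZero.ne n) hα₀ hα₁

lemma volume_ball_eq (x : Pt n) {r : ℝ} (hr : 0 ≤ r) :
    volume (ball x r) = ENNReal.ofReal (r ^ n) * volume (ball (0 : Pt n) 1) := by
  rw [Measure.addHaar_ball _ x hr, finrank_euclideanSpace_fin]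

/-- A lower bound for the energy of a spike of height `1/2` and width one. -/
def spikeConstant (n : ℕ) (α : ℝ) : ℝ≥0∞ :=
  ENNReal.ofReal (1 / (4 ^ (n + 1) * 3 ^ ((n : ℝ) + 2 * α))) *
    (volume (ball (0 : Pt n) 1) * volume (ball (0 : Pt n) 1))

lemma spikeConstant_ne_zero (n : ℕ) (α : ℝ) : spikeConstant n α ≠ 0 := by
  have hV : volume (ball (0 : Pt n) 1) ≠ 0 := (measure_ball_pos volume _ one_pos).ne'
  exact mul_ne_zero (ENNReal.ofReal_pos.2 (by positivity)).ne' (mul_ne_zero hV hV)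

lemma exists_ball_subset_annulus (p : Pt n) {ρ : ℝ} (hρ : 0 < ρ) :
    ∃ c : Pt n, ∀ y ∈ ball c (ρ / 2), ρ ≤ dist y p ∧ dist y p < 2 * ρ := by
  obtain ⟨e, he⟩ := exists_norm_eq (Pt n) (show 0 ≤ 3 * ρ / 2 by positivity)
  refine ⟨p + e, fun y hy => ?_⟩
  rw [mem_ball] at hy
  have hcp : dist (p + e) p = 3 * ρ / 2 := by simpa using he
  have := dist_triangle y (p + e) p
  have := dist_triangle_left (p + e) p y
  constructor <;> linarith

lemma spikeConstant_mul_rpow_le_lintegral (hα : 0 ≤ α) {v : Pt n → ℝ} {p : Pt n}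
    {B : Set (Pt n)} {ρ : ℝ} (hρ : 0 < ρ) (hB : ball p (2 * ρ) ⊆ B)
    (hhigh : ∀ x, dist x p < ρ / 2 → 1 / 2 ≤ v x)
    (hzero : ∀ y, ρ ≤ dist y p → dist y p < 2 * ρ → v y = 0) :
    spikeConstant n α * ENNReal.ofReal (ρ ^ ((n : ℝ) - 2 * α))
      ≤ ∫⁻ x in ball p (ρ / 2), ∫⁻ y in B, energyDensity α v x y := by
  obtain ⟨c, hc⟩ := exists_ball_subset_annulus p hρ
  have hosc : ∀ x ∈ ball p (ρ / 2), ∀ y ∈ ball c (ρ / 2), 1 / 2 ≤ |v x - v y| := by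
    intro x hx y hy
    rw [hzero y (hc y hy).1 (hc y hy).2, sub_zero]
    exact (hhigh x hx).trans (le_abs_self _)
  have hdist : ∀ x ∈ ball p (ρ / 2), ∀ y ∈ ball c (ρ / 2), dist x y ≤ 3 * ρ := by
    intro x hx y hy
    have := dist_triangle_right x y p
    have := (hc y hy).2
    rw [mem_ball] at hx
    linarith
  have hconst : 1 / (4 ^ (n + 1) * 3 ^ ((n : ℝ) + 2 * α)) * ρ ^ ((n : ℝ) - 2 * α)
      = (1 / 2) ^ 2 / (3 * ρ) ^ ((n : ℝ) + 2 * α) * ((ρ / 2) ^ n * (ρ / 2) ^ n) := by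
    rw [show (n : ℝ) - 2 * α = n + n - (n + 2 * α) by ring, Real.rpow_sub hρ, Real.rpow_add hρ,
      Real.rpow_natCast, Real.mul_rpow (by norm_num) hρ.le, div_pow ρ, pow_succ,
      show (4 : ℝ) = 2 * 2 by norm_num, mul_pow]
    field_simp
  calc spikeConstant n α * ENNReal.ofReal (ρ ^ ((n : ℝ) - 2 * α))
      = ENNReal.ofReal ((1 / 2) ^ 2 / (3 * ρ) ^ ((n : ℝ) + 2 * α)) *
          (volume (ball p (ρ / 2)) * volume (ball c (ρ / 2))) := by
        rw [volume_ball_eq p (by positivity), volume_ball_eq c (by positivity), spikeConstant,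
          mul_right_comm, ← ENNReal.ofReal_mul (by positivity), hconst,
          ENNReal.ofReal_mul (by positivity), ENNReal.ofReal_mul (by positivity)]
        ring
    _ ≤ ∫⁻ x in ball p (ρ / 2), ∫⁻ y in ball c (ρ / 2), energyDensity α v x y :=
        ofReal_mul_volume_mul_volume_le hα measurableSet_ball measurableSet_ball (by norm_num)
          hosc hdist
    _ ≤ ∫⁻ x in ball p (ρ / 2), ∫⁻ y in B, energyDensity α v x y := by
        gcongr with x
        exact fun y hy => hB (hc y hy).2

lemma spikeConstant_mul_card_le_energy (hα : 0 ≤ α) {v : Pt n → ℝ} {G : Finset (Pt n)}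
    {B : Set (Pt n)} {ρ : ℝ} (hρ : 0 < ρ) (hB : ∀ p ∈ G, ball p (2 * ρ) ⊆ B)
    (hsep : ∀ p ∈ G, ∀ q ∈ G, p ≠ q → ρ ≤ dist p q)
    (hhigh : ∀ p ∈ G, ∀ x, dist x p < ρ / 2 → 1 / 2 ≤ v x)
    (hzero : ∀ p ∈ G, ∀ y, ρ ≤ dist y p → dist y p < 2 * ρ → v y = 0) :
    spikeConstant n α * ENNReal.ofReal (G.card * ρ ^ ((n : ℝ) - 2 * α)) ≤ energy α v B := by
  have hdisj : (G : Set (Pt n)).PairwiseDisjoint fun p => ball p (ρ / 2) := fun p hp q hq hpq =>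
    ball_disjoint_ball (by linarith [hsep p hp q hq hpq])
  calc spikeConstant n α * ENNReal.ofReal (G.card * ρ ^ ((n : ℝ) - 2 * α))
      = ∑ _p ∈ G, spikeConstant n α * ENNReal.ofReal (ρ ^ ((n : ℝ) - 2 * α)) := by
        rw [Finset.sum_const, nsmul_eq_mul, ENNReal.ofReal_mul (by positivity),
          ENNReal.ofReal_natCast]
        ring
    _ ≤ ∑ p ∈ G, ∫⁻ x in ball p (ρ / 2), ∫⁻ y in B, energyDensity α v x y :=
        Finset.sum_le_sum fun p hp =>
          spikeConstant_mul_rpow_le_lintegral hα hρ (hB p hp) (hhigh p hp) (hzero p hp)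
    _ = ∫⁻ x in ⋃ p ∈ G, ball p (ρ / 2), ∫⁻ y in B, energyDensity α v x y :=
        (lintegral_biUnion_finset hdisj (fun p _ => measurableSet_ball) _).symm
    _ ≤ energy α v B :=
        lintegral_mono_set (iUnion₂_subset fun p hp =>
          (ball_subset_ball (by linarith)).trans (hB p hp))

end NeZero

end Energy

/-! ### Tent functions -/

section Tent

variable {X : Type*} [PseudoMetricSpace X] {G : Set X} {s : ℝ}

/-- The function of height one and slope `1/s` that peaks on `G` and vanishes at distance at least
`s` from `G`. -/
def tent (G : Set X) (s : ℝ) (x : X) : ℝ := max 0 (1 - infDist x G / s)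

lemma continuous_tent (G : Set X) (s : ℝ) : Continuous (tent G s) := by
  have := continuous_infDist_pt G
  unfold tent
  fun_prop

lemma tent_nonneg (G : Set X) (s : ℝ) (x : X) : 0 ≤ tent G s x := le_max_left _ _

lemma tent_le_one (hs : 0 ≤ s) (x : X) : tent G s x ≤ 1 :=
  max_le zero_le_one (sub_le_self _ (div_nonneg infDist_nonneg hs))

lemma tent_eq_zero (hG : G.Nonempty) (hs : 0 < s) {x : X} (h : ∀ p ∈ G, s ≤ dist x p) :
    tent G s x = 0 :=
  max_eq_left (sub_nonpos.2 ((one_le_div hs).2 ((le_infDist hG).2 fun {p} hp => h p hp)))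

lemma half_le_tent (hs : 0 < s) {x p : X} (hp : p ∈ G) (h : dist x p ≤ s / 2) :
    1 / 2 ≤ tent G s x := by
  have hdiv : infDist x G / s ≤ 1 / 2 := by
    rw [div_le_iff₀ hs]
    linarith [infDist_le_dist_of_mem (x := x) hp]
  exact le_max_of_le_right (by linarith)

lemma abs_tent_sub_tent_le_one (hs : 0 ≤ s) (x y : X) : |tent G s x - tent G s y| ≤ 1 :=
  abs_sub_le_of_le_of_le (tent_nonneg G s x) (tent_le_one hs x) (tent_nonneg G s y)
    (tent_le_one hs y) |>.trans_eq (sub_zero 1)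

lemma abs_tent_sub_tent_le (hs : 0 < s) (x y : X) :
    |tent G s x - tent G s y| ≤ dist x y / s := by
  have hinf : |infDist x G - infDist y G| ≤ dist x y := by
    simpa [Real.dist_eq] using (lipschitz_infDist_pt G).dist_le_mul x y
  calc |tent G s x - tent G s y|
      ≤ |(1 - infDist x G / s) - (1 - infDist y G / s)| := by
        simpa [tent, max_comm] using
          abs_max_sub_max_le_abs (1 - infDist x G / s) (1 - infDist y G / s) 0
    _ = |infDist x G - infDist y G| / s := by
        rw [show (1 - infDist x G / s) - (1 - infDist y G / s)
            = (infDist y G - infDist x G) / s by ring, abs_div, abs_of_pos hs, abs_sub_comm]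
    _ ≤ dist x y / s := by gcongr

end Tent

section TentEnergy

variable {n : ℕ} [NeZero n] {α s r : ℝ}

lemma volume_ball_inter_biUnion_ball_le (G : Finset (Pt n)) (x : Pt n) (hs : 0 ≤ s)
    (hsr : s ≤ r) :
    volume (ball x r ∩ ⋃ p ∈ G, ball p s)
      ≤ ENNReal.ofReal ({p ∈ G | dist p x < 2 * r}.card * s ^ n)
          * volume (ball (0 : Pt n) 1) := by
  have hsub : ball x r ∩ ⋃ p ∈ G, ball p s ⊆ ⋃ p ∈ {p ∈ G | dist p x < 2 * r}, ball p s := by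
    rintro y ⟨hyx, hy⟩
    obtain ⟨p, hp, hyp⟩ := mem_iUnion₂.1 hy
    refine mem_biUnion (Finset.mem_filter.2 ⟨hp, ?_⟩) hyp
    rw [mem_ball] at hyx hyp
    linarith [dist_triangle_left p x y]
  calc volume (ball x r ∩ ⋃ p ∈ G, ball p s)
      ≤ ∑ p ∈ {p ∈ G | dist p x < 2 * r}, volume (ball p s) :=
        (measure_mono hsub).trans (measure_biUnion_finset_le _ _)
    _ = _ := by
        simp_rw [volume_ball_eq _ hs]
        rw [Finset.sum_const, nsmul_eq_mul, ENNReal.ofReal_mul (by positivity),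
          ENNReal.ofReal_natCast, mul_assoc]

lemma ofReal_rpow_mul_energy_tent_le_of_le (hα : 0 ≤ α) (G : Set (Pt n)) (x : Pt n)
    (hr : 0 < r) (hrs : r ≤ s) :
    ENNReal.ofReal (r ^ (2 * α - (n : ℝ))) * energy α (tent G s) (ball x r)
      ≤ ENNReal.ofReal 8 * (volume (ball (0 : Pt n) 1) * truncatedMass n α) := by
  have hs : 0 < s := hr.trans_le hrs
  have hosc : ∀ y ∈ ball x r, ∀ z ∈ ball x r, |tent G s y - tent G s z| ^ 2
      ≤ 4 * (r ^ 2 / s ^ 2) * min 1 (‖y - z‖ ^ 2 / (2 * r) ^ 2) := by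
    intro y hy z hz
    have hyz : ‖y - z‖ ≤ 2 * r := by
      rw [← dist_eq_norm]
      rw [mem_ball] at hy hz
      linarith [dist_triangle_right y z x]
    have hsq : ‖y - z‖ ^ 2 / (2 * r) ^ 2 ≤ 1 :=
      div_le_one_of_le₀ (pow_le_pow_left₀ (norm_nonneg _) hyz 2) (by positivity)
    rw [min_eq_right hsq]
    calc |tent G s y - tent G s z| ^ 2 ≤ (dist y z / s) ^ 2 := by
          gcongr
          exact abs_tent_sub_tent_le hs y z
      _ = _ := by
          rw [dist_eq_norm]
          field_simp
          norm_num
  refine (ofReal_rpow_mul_energy_le (N := r ^ n) hr .univ (by positivity) (by positivity)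
    (by positivity) hosc (by simp) (by rw [inter_univ, volume_ball_eq x hr.le])).trans ?_
  gcongr ENNReal.ofReal ?_ * _
  have hcancel : r ^ (2 * α - (n : ℝ)) * r ^ n * r ^ (-(2 * α)) = 1 := by
    rw [← Real.rpow_natCast, ← Real.rpow_add hr, ← Real.rpow_add hr]
    ring_nf
    exact Real.rpow_zero r
  have htwo : (2 : ℝ) ^ (-(2 * α)) ≤ 1 :=
    Real.rpow_le_one_of_one_le_of_nonpos one_le_two (by linarith)
  have hratio : r ^ 2 / s ^ 2 ≤ 1 := div_le_one_of_le₀ (by gcongr) (by positivity)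
  calc 2 * (r ^ (2 * α - (n : ℝ)) * r ^ n * (4 * (r ^ 2 / s ^ 2) * (2 * r) ^ (-(2 * α))))
      = 8 * (r ^ 2 / s ^ 2 * 2 ^ (-(2 * α)))
          * (r ^ (2 * α - (n : ℝ)) * r ^ n * r ^ (-(2 * α))) := by
        rw [Real.mul_rpow zero_le_two hr.le]
        ring
    _ ≤ 8 := by
        rw [hcancel]
        nlinarith [mul_le_one₀ hratio (by positivity) htwo]

lemma ofReal_rpow_mul_energy_tent_le_card {G : Finset (Pt n)} (hG : G.Nonempty) (x : Pt n)
    (hs : 0 < s) (hsr : s ≤ r) :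
    ENNReal.ofReal (r ^ (2 * α - (n : ℝ))) * energy α (tent (G : Set (Pt n)) s) (ball x r)
      ≤ ENNReal.ofReal
          (2 * ({p ∈ G | dist p x < 2 * r}.card * (s / r) ^ ((n : ℝ) - 2 * α))) *
          (volume (ball (0 : Pt n) 1) * truncatedMass n α) := by
  have hr : 0 < r := hs.trans_le hsr
  have hosc : ∀ y ∈ ball x r, ∀ z ∈ ball x r,
      |tent (G : Set (Pt n)) s y - tent (G : Set (Pt n)) s z| ^ 2
        ≤ 1 * min 1 (‖y - z‖ ^ 2 / s ^ 2) := by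
    intro y _ z _
    rw [one_mul, ← div_pow, ← dist_eq_norm]
    exact le_min (pow_le_one₀ (abs_nonneg _) (abs_tent_sub_tent_le_one hs.le y z))
      (pow_le_pow_left₀ (abs_nonneg _) (abs_tent_sub_tent_le hs y z) 2)
  have hzero : ∀ y ∉ ⋃ p ∈ G, ball p s, tent (G : Set (Pt n)) s y = 0 := fun y hy =>
    tent_eq_zero hG hs fun p hp => not_lt.1 fun h => hy (mem_biUnion hp h)
  refine (ofReal_rpow_mul_energy_le hr (G.measurableSet_biUnion fun p _ => measurableSet_ball)
    zero_le_one (by positivity) hs hosc (fun y hy z hz => (hzero y hy).trans (hzero z hz).symm)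
    (volume_ball_inter_biUnion_ball_le G x hs.le hsr)).trans_eq ?_
  rw [Real.div_rpow hs.le hr.le, ← neg_sub (n : ℝ) (2 * α), Real.rpow_neg hr.le,
    Real.rpow_sub hs, Real.rpow_neg hs.le, Real.rpow_natCast]
  congr 2
  field_simp

lemma Qnorm_tent_le (hα : 0 ≤ α) {G : Finset (Pt n)} (hG : G.Nonempty) (hs : 0 < s) {C : ℝ}
    (hC : 1 ≤ C)
    (hpack : ∀ (x : Pt n) (r : ℝ), s ≤ r →
      {p ∈ G | dist p x < 2 * r}.card * (s / r) ^ ((n : ℝ) - 2 * α) ≤ C) :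
    Qnorm α (tent (G : Set (Pt n)) s) ≤
      (ENNReal.ofReal (8 * C) *
        (volume (ball (0 : Pt n) 1) * truncatedMass n α)) ^ (1 / 2 : ℝ) := by
  refine Qnorm_le fun x r hr => ?_
  rcases le_total r s with hrs | hsr
  · refine (ofReal_rpow_mul_energy_tent_le_of_le hα _ x hr hrs).trans ?_
    gcongr
    linarith
  · refine (ofReal_rpow_mul_energy_tent_le_card hG x hs hsr).trans ?_
    gcongr ENNReal.ofReal ?_ * _
    linarith [hpack x r hsr]

end TentEnergy

/-! ### Stretches centered at the dust -/

namespace CantorParameters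

variable (P : CantorParameters) {n k : ℕ} {p q : Pt n}

/-- The first generation in which `p` appears (junk value `0` off the dust). -/
def level (p : Pt n) : ℕ := sInf {k | p ∈ P.grid n k}

/-- The grid points whose level is exactly `k + 1`. -/
def newPoints (n k : ℕ) : Finset (Pt n) := P.grid n (k + 1) \ P.grid n k

/-- The radius of the stretches at the points of level `k`, a quarter of the separation of the
points of that level. -/
def stretchRadius (k : ℕ) : ℝ := P.gap / 4 * P.ratio ^ k

lemma stretchRadius_pos (k : ℕ) : 0 < P.stretchRadius k :=
  mul_pos (div_pos P.gap_pos four_pos) (pow_pos P.ratio_pos k)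

lemma stretchRadius_le_gap (k : ℕ) : P.stretchRadius k ≤ P.gap :=
  (mul_le_of_le_one_right (div_pos P.gap_pos four_pos).le
    (pow_le_one₀ P.ratio_pos.le P.ratio_lt_one.le)).trans (by linarith [P.gap_pos])

variable {P}

lemma mem_grid_level (hp : p ∈ P.dust n) : p ∈ P.grid n (P.level p) :=
  Nat.sInf_mem (s := {k | p ∈ P.grid n k}) (mem_dust.1 hp)

lemma mem_grid_of_mem_newPoints (hp : p ∈ P.newPoints n k) : p ∈ P.grid n (k + 1) :=
  (Finset.mem_sdiff.1 hp).1

lemma level_eq (hp : p ∈ P.newPoints n k) : P.level p = k + 1 := by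
  have hpk := mem_grid_of_mem_newPoints hp
  refine (Nat.sInf_le hpk).antisymm (not_lt.1 fun h => (Finset.mem_sdiff.1 hp).2 ?_)
  exact P.grid_mono n (Nat.lt_succ_iff.1 h) (mem_grid_level (grid_subset_dust hpk))

variable (P) in
lemma two_pow_le_card_newPoints [NeZero n] (k : ℕ) :
    2 ^ (n * (k + 1)) ≤ (P.newPoints n k).card := by
  rw [newPoints, Finset.card_sdiff_of_subset (P.grid_mono n k.le_succ), card_grid, card_grid]
  have hcard : (P.midpoints (k + 1)).card = 2 ^ (k + 1) + (P.midpoints k).card := by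
    have hk := P.card_midpoints k
    have hk' := P.card_midpoints (k + 1)
    rw [pow_succ 2 (k + 1)] at hk'
    omega
  rw [hcard, mul_comm n, pow_mul]
  exact Nat.le_sub_of_add_le (pow_add_pow_le (Nat.zero_le _) (Nat.zero_le _) (NeZero.ne n))

lemma four_mul_stretchRadius_le_dist {m : ℕ} (hp : p ∈ P.grid n k) (hq : q ∈ P.grid n m)
    (hpq : p ≠ q) : 4 * P.stretchRadius k ≤ dist p q := by
  have := gap_mul_pow_le_dist hp hq hpq
  rw [stretchRadius]
  linarith

variable (P) in
/-- Balls around all points of the dust, whose radii depend only on the levels of the centers. -/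
def stretches (n : ℕ) : SeparatedBalls (Pt n) where
  centers := P.dust n
  radius p := P.stretchRadius (P.level p)
  radius_pos p _ := P.stretchRadius_pos _
  two_mul_radius_add_le_dist p hp q hq hpq := by
    have hpq' := four_mul_stretchRadius_le_dist (mem_grid_level hp) (mem_grid_level hq) hpq
    have hqp' := four_mul_stretchRadius_le_dist (mem_grid_level hq) (mem_grid_level hp) hpq.symm
    rw [dist_comm] at hqp'
    linarith

lemma dist_stretches_map (hp : p ∈ P.newPoints n k) {x : Pt n}
    (hx : dist x p < P.stretchRadius (k + 1)) :
    dist ((P.stretches n).map x) p = dist x p ^ 2 / P.stretchRadius (k + 1) := by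
  have hradius : (P.stretches n).radius p = P.stretchRadius (k + 1) := by
    rw [← level_eq hp]
    rfl
  rw [SeparatedBalls.map_of_mem (grid_subset_dust (mem_grid_of_mem_newPoints hp))
    (hx.trans_eq hradius.symm), hradius, dist_radialStretch_center (P.stretchRadius_pos _) hx.le]

end CantorParameters

/-! ### Unboundedness of the composition operator -/

namespace CantorParameters

variable {P : CantorParameters} {n k : ℕ} {α β s r : ℝ}

lemma card_filter_dist_lt_mul_rpow_le_of_le_one (hβ₀ : 0 ≤ β) (hβ : β ≤ n * P.dimension)
    (hs : 0 < s) (hsβ : s ^ β = (P.ratio ^ k) ^ (n * P.dimension)) (x : Pt n) (hsr : s ≤ r)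
    (hr : r ≤ 1) :
    {p ∈ P.grid n k | dist p x < 2 * r}.card * (s / r) ^ β
      ≤ 1 + 2 ^ n * (4 / P.gap) ^ (n * P.dimension) := by
  have hgap := P.gap_pos
  have hratio := P.ratio_pos
  have hr₀ : 0 < r := hs.trans_le hsr
  set d := n * P.dimension
  have hcard := card_le_of_subset_grid (k := k) (P := P) (L := 4 * r) (by positivity)
    (Finset.filter_subset (fun p => dist p x < 2 * r) _) fun y hy z hz i =>
      (abs_apply_sub_apply_le_dist y z i).trans (by
        linarith [dist_triangle_right y z x, (Finset.mem_filter.1 hy).2,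
          (Finset.mem_filter.1 hz).2])
  have hone : (s / r) ^ β ≤ 1 :=
    Real.rpow_le_one (by positivity) ((div_le_one hr₀).2 hsr) hβ₀
  have hrd : r ^ d / r ^ β ≤ 1 := by
    rw [← Real.rpow_sub hr₀]
    exact Real.rpow_le_one hr₀.le hr (by linarith)
  calc {p ∈ P.grid n k | dist p x < 2 * r}.card * (s / r) ^ β
      ≤ (1 + 2 ^ n * (4 * r / (P.gap * P.ratio ^ k)) ^ d) * (s / r) ^ β := by
        gcongr
        exact hcard.trans (max_le_add_of_nonneg zero_le_one (by positivity))
    _ = (s / r) ^ β + 2 ^ n * (4 / P.gap) ^ d * (r ^ d / r ^ β) := by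
        rw [mul_div_mul_comm, Real.mul_rpow (by positivity) (by positivity),
          Real.div_rpow hr₀.le (by positivity), Real.div_rpow hs.le hr₀.le, hsβ]
        field_simp
    _ ≤ 1 + 2 ^ n * (4 / P.gap) ^ d * 1 := by gcongr
    _ = _ := by rw [mul_one]

lemma card_filter_dist_lt_mul_rpow_le_of_one_le (hβ₀ : 0 ≤ β) (hs : 0 < s)
    (hsβ : s ^ β = (P.ratio ^ k) ^ (n * P.dimension)) (x : Pt n) (hr : 1 ≤ r) :
    {p ∈ P.grid n k | dist p x < 2 * r}.card * (s / r) ^ β ≤ 2 ^ n := by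
  have hcard : {p ∈ P.grid n k | dist p x < 2 * r}.card ≤ 2 ^ (n * (k + 1)) :=
    (Finset.card_filter_le _ _).trans (P.card_grid_le_two_pow n k)
  calc ({p ∈ P.grid n k | dist p x < 2 * r}.card : ℝ) * (s / r) ^ β
      ≤ 2 ^ (n * (k + 1)) * s ^ β := by
        gcongr
        · exact mod_cast hcard
        · exact div_le_self hs.le hr
    _ = 2 ^ n := by
        rw [hsβ, ratio_pow_rpow_mul_dimension, mul_add_one, pow_add, mul_right_comm, ← mul_pow]
        norm_num

/-- A bound for the packing sums `card (grid ∩ ball x (2 r)) * (s / r) ^ β`. -/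
def packingConstant (P : CantorParameters) (n : ℕ) : ℝ :=
  1 + 2 ^ n * (4 / P.gap) ^ (n * P.dimension) + 2 ^ n

lemma card_filter_dist_lt_mul_rpow_le (hβ₀ : 0 ≤ β) (hβ : β ≤ n * P.dimension) (hs : 0 < s)
    (hsβ : s ^ β = (P.ratio ^ k) ^ (n * P.dimension)) (x : Pt n) (hsr : s ≤ r) :
    {p ∈ P.grid n k | dist p x < 2 * r}.card * (s / r) ^ β ≤ P.packingConstant n := by
  have hgap := P.gap_pos
  have hpow : (0 : ℝ) < 2 ^ n := by positivity
  have hfar : 0 ≤ 2 ^ n * (4 / P.gap) ^ (n * P.dimension) := by positivity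
  unfold packingConstant
  rcases le_total r 1 with hr | hr
  · linarith [card_filter_dist_lt_mul_rpow_le_of_le_one hβ₀ hβ hs hsβ x hsr hr]
  · linarith [card_filter_dist_lt_mul_rpow_le_of_one_le hβ₀ hs hsβ x hr]

variable (P) in
lemma one_le_packingConstant (n : ℕ) : 1 ≤ P.packingConstant n := by
  have hgap := P.gap_pos
  rw [packingConstant, add_assoc]
  exact le_add_of_nonneg_right (by positivity)

lemma half_le_tent_stretches_map {p x : Pt n} {ρ : ℝ} (hp : p ∈ P.newPoints n k) (hs : 0 < s)
    (hρs : ρ ^ 2 = s * P.stretchRadius (k + 1)) (hρ : 2 * ρ ≤ P.stretchRadius (k + 1))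
    (hx : dist x p < ρ / 2) :
    1 / 2 ≤ tent (P.grid n (k + 1) : Set (Pt n)) s ((P.stretches n).map x) := by
  refine half_le_tent hs (mem_grid_of_mem_newPoints hp) ?_
  have hε := P.stretchRadius_pos (k + 1)
  have hsq : dist x p ^ 2 ≤ (ρ / 2) ^ 2 := by gcongr
  rw [dist_stretches_map hp (by linarith [dist_nonneg (x := x) (y := p)]), div_le_iff₀ hε]
  linarith [sq_nonneg ρ]

lemma tent_stretches_map_eq_zero {p x : Pt n} {ρ : ℝ} (hp : p ∈ P.newPoints n k) (hs : 0 < s)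
    (hρ₀ : 0 ≤ ρ) (hρs : ρ ^ 2 = s * P.stretchRadius (k + 1)) (hsε : s ≤ P.stretchRadius (k + 1))
    (hρx : ρ ≤ dist x p) (hx : dist x p < P.stretchRadius (k + 1)) :
    tent (P.grid n (k + 1) : Set (Pt n)) s ((P.stretches n).map x) = 0 := by
  have hpk := mem_grid_of_mem_newPoints hp
  have hε := P.stretchRadius_pos (k + 1)
  have hmap := dist_stretches_map hp hx
  refine tent_eq_zero ⟨p, hpk⟩ hs fun q hq => ?_
  obtain rfl | hpq := eq_or_ne p q
  · rw [hmap, le_div_iff₀ hε, ← hρs]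
    gcongr
  · have hle : dist ((P.stretches n).map x) p ≤ P.stretchRadius (k + 1) := by
      rw [hmap, div_le_iff₀ hε, ← sq]
      gcongr
    linarith [dist_triangle_left p q ((P.stretches n).map x),
      four_mul_stretchRadius_le_dist hpk hq hpq]

variable (P) in
/-- The radius of a ball about `0` that contains the dust with room for all stretched spikes. -/
def enclosingRadius (n : ℕ) : ℝ := √n * P.halfLength + P.gap

variable (P) in
lemma enclosingRadius_pos (n : ℕ) : 0 < P.enclosingRadius n :=
  add_pos_of_nonneg_of_pos (mul_nonneg (Real.sqrt_nonneg _) P.halfLength_pos.le) P.gap_pos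

/-- Composition with the stretches widens the spike at a point of level `k + 1` from radius `s` to
the geometric mean `ρ` of `s` and the radius of the stretch. -/
lemma spikeConstant_mul_card_le_energy_comp [NeZero n] (hα : 0 ≤ α) {ρ : ℝ} (hs : 0 < s)
    (hρ₀ : 0 < ρ) (hρs : ρ ^ 2 = s * P.stretchRadius (k + 1))
    (hρ : 2 * ρ ≤ P.stretchRadius (k + 1)) :
    spikeConstant n α * ENNReal.ofReal ((P.newPoints n k).card * ρ ^ ((n : ℝ) - 2 * α)) ≤
      energy α (tent (P.grid n (k + 1)) s ∘ (P.stretches n).map)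
        (ball 0 (P.enclosingRadius n)) := by
  have hε := P.stretchRadius_pos (k + 1)
  have hsε : s ≤ P.stretchRadius (k + 1) := by nlinarith [hε]
  refine spikeConstant_mul_card_le_energy hα hρ₀ (fun p hp => ball_subset_ball' ?_)
    (fun p hp q hq hpq => ?_) (fun p hp x => half_le_tent_stretches_map hp hs hρs hρ)
    fun p hp y hρy hy => tent_stretches_map_eq_zero hp hs hρ₀.le hρs hsε hρy (hy.trans_le hρ)
  · rw [dist_zero_right, enclosingRadius]
    linarith [P.stretchRadius_le_gap (k + 1),
      norm_le_of_mem_dust (grid_subset_dust (mem_grid_of_mem_newPoints hp))]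
  · linarith [four_mul_stretchRadius_le_dist (mem_grid_of_mem_newPoints hp)
      (mem_grid_of_mem_newPoints hq) hpq]

lemma Qnorm_tent_pos [NeZero n] (hα : 0 ≤ α) (hs : 0 < s) (hsk : s ≤ P.stretchRadius k) :
    0 < Qnorm α (tent (P.grid n k : Set (Pt n)) s) := by
  refine (ENNReal.rpow_pos_of_nonneg ?_ (by norm_num)).trans_le (le_Qnorm _ 0 (mul_pos two_pos hs))
  have henergy := spikeConstant_mul_card_le_energy (G := {(0 : Pt n)})
    (v := tent (P.grid n k : Set (Pt n)) s) (B := ball 0 (2 * s)) hα hs (by simp) (by simp)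
    (by simpa using fun x hx => half_le_tent hs zero_mem_grid (by simpa using hx.le))
    (by
      simp only [Finset.mem_singleton, forall_eq]
      refine fun y hsy hy => tent_eq_zero ⟨0, zero_mem_grid⟩ hs fun q hq => ?_
      obtain rfl | hq₀ := eq_or_ne 0 q
      · exact hsy
      · linarith [dist_triangle_left 0 q y,
          four_mul_stretchRadius_le_dist (zero_mem_grid (k := k)) hq hq₀])
  refine ENNReal.mul_pos (ENNReal.ofReal_pos.2 (by positivity)).ne' (henergy.trans_lt' ?_).ne'
  refine ENNReal.mul_pos (spikeConstant_ne_zero n α) (ENNReal.ofReal_pos.2 ?_).ne'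
  rw [Finset.card_singleton]
  positivity

section Scales

variable (P)

/-- The radius `s` of the spikes before composition, chosen so that `s ^ (n - 2 * α)` is
`2 ^ (-n * k)`, about the reciprocal of the number of grid points of generation at most `k`. -/
def tentScale (n : ℕ) (α : ℝ) (k : ℕ) : ℝ := (P.ratio ^ k) ^ (n * P.dimension / (n - 2 * α))

/-- The radius of the spikes after composition with the stretches. -/
def spikeRadius (n : ℕ) (α : ℝ) (k : ℕ) : ℝ := √(P.tentScale n α k * P.stretchRadius k)

lemma tentScale_pos (n : ℕ) (α : ℝ) (k : ℕ) : 0 < P.tentScale n α k :=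
  Real.rpow_pos_of_pos (pow_pos P.ratio_pos k) _

lemma spikeRadius_pos (n : ℕ) (α : ℝ) (k : ℕ) : 0 < P.spikeRadius n α k :=
  Real.sqrt_pos.2 (mul_pos (P.tentScale_pos n α k) (P.stretchRadius_pos k))

lemma spikeRadius_sq (n : ℕ) (α : ℝ) (k : ℕ) :
    P.spikeRadius n α k ^ 2 = P.tentScale n α k * P.stretchRadius k :=
  Real.sq_sqrt (mul_pos (P.tentScale_pos n α k) (P.stretchRadius_pos k)).le

variable {P}

lemma tentScale_rpow (hα : 2 * α < n) :
    P.tentScale n α k ^ ((n : ℝ) - 2 * α) = (P.ratio ^ k) ^ (n * P.dimension) := by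
  rw [tentScale, ← Real.rpow_mul (pow_nonneg P.ratio_pos.le k), div_mul_cancel₀ _ (by linarith)]

lemma two_mul_spikeRadius_le (h : 4 * P.tentScale n α k ≤ P.stretchRadius k) :
    2 * P.spikeRadius n α k ≤ P.stretchRadius k := by
  have hε := P.stretchRadius_pos k
  have hsq : (2 * P.spikeRadius n α k) ^ 2 ≤ P.stretchRadius k ^ 2 := by
    rw [mul_pow, spikeRadius_sq]
    nlinarith
  exact (abs_le_of_sq_le_sq' hsq hε.le).2

variable (P) in
lemma tendsto_ratio_pow : Tendsto (fun k => P.ratio ^ k) atTop (𝓝[>] 0) :=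
  tendsto_nhdsWithin_iff.2 ⟨tendsto_pow_atTop_nhds_zero_of_lt_one P.ratio_pos.le P.ratio_lt_one,
    .of_forall fun k => mem_Ioi.2 (pow_pos P.ratio_pos k)⟩

lemma eventually_four_mul_tentScale_le (hα : 2 * α < n) (hdim : n - 2 * α < n * P.dimension) :
    ∀ᶠ k in atTop, 4 * P.tentScale n α k ≤ P.stretchRadius k := by
  set e := n * P.dimension / (n - 2 * α)
  have he : 0 < e - 1 := sub_pos.2 ((one_lt_div (by linarith)).2 hdim)
  have hlim : Tendsto (fun k => (P.ratio ^ k) ^ (e - 1)) atTop (𝓝 0) := by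
    have := ((tendsto_nhdsWithin_iff.1 P.tendsto_ratio_pow).1).rpow_const (.inr he.le)
    rwa [Real.zero_rpow he.ne'] at this
  filter_upwards [hlim.eventually (gt_mem_nhds (div_pos P.gap_pos (by norm_num : (0 : ℝ) < 16)))]
    with k hk
  have hratio : 0 < P.ratio ^ k := pow_pos P.ratio_pos k
  rw [Real.rpow_sub hratio, Real.rpow_one, div_lt_iff₀ hratio] at hk
  rw [tentScale, stretchRadius]
  linarith

lemma two_pow_mul_spikeRadius_rpow (hα : 2 * α < n) (k : ℕ) :
    2 ^ (n * k) * P.spikeRadius n α k ^ ((n : ℝ) - 2 * α) =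
      (P.gap / 4) ^ ((n - 2 * α) / 2) *
        (P.ratio ^ k)⁻¹ ^ ((n * P.dimension - (n - 2 * α)) / 2) := by
  have hgap := P.gap_pos
  have hratio : 0 < P.ratio ^ k := pow_pos P.ratio_pos k
  have htwo : (2 : ℝ) ^ (n * k) = (P.ratio ^ k) ^ (-(n * P.dimension)) := by
    rw [Real.rpow_neg hratio.le, ratio_pow_rpow_mul_dimension, one_div, inv_pow, inv_inv]
  have hhalf (x : ℝ) (hx : 0 ≤ x) : √x ^ ((n : ℝ) - 2 * α) = x ^ (((n : ℝ) - 2 * α) / 2) := by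
    rw [Real.sqrt_eq_rpow, ← Real.rpow_mul hx, one_div_mul_eq_div]
  have hscale : P.tentScale n α k ^ (((n : ℝ) - 2 * α) / 2)
      = (P.ratio ^ k) ^ (n * P.dimension / 2) := by
    rw [tentScale, ← Real.rpow_mul hratio.le]
    congr 1
    field_simp [(sub_pos.2 hα).ne']
  have hexp : (P.ratio ^ k) ^ (-((n * P.dimension - (n - 2 * α)) / 2)) =
      (P.ratio ^ k) ^ (-(n * P.dimension)) * (P.ratio ^ k) ^ (n * P.dimension / 2) *
        (P.ratio ^ k) ^ ((n - 2 * α) / 2) := by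
    rw [← Real.rpow_add hratio, ← Real.rpow_add hratio]
    ring_nf
  rw [spikeRadius, hhalf _ (mul_pos (P.tentScale_pos n α k) (P.stretchRadius_pos k)).le,
    Real.mul_rpow (P.tentScale_pos n α k).le (P.stretchRadius_pos k).le, hscale, htwo,
    stretchRadius, Real.mul_rpow (by positivity) hratio.le, Real.inv_rpow hratio.le,
    ← Real.rpow_neg hratio.le, hexp]
  ring

lemma tendsto_two_pow_mul_spikeRadius_rpow (hα : 2 * α < n)
    (hdim : n - 2 * α < n * P.dimension) :
    Tendsto (fun k => 2 ^ (n * k) * P.spikeRadius n α k ^ ((n : ℝ) - 2 * α)) atTop atTop := by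
  have hgap := P.gap_pos
  simp_rw [two_pow_mul_spikeRadius_rpow hα]
  exact ((_root_.tendsto_rpow_atTop (by linarith)).comp
    P.tendsto_ratio_pow.inv_tendsto_nhdsGT_zero).const_mul_atTop (by positivity)

end Scales

section Unbounded

variable (P) in
/-- The test functions: tents with spikes at all grid points of generation at most `k`. -/
def gridTent (n : ℕ) (α : ℝ) (k : ℕ) : Pt n → ℝ := tent (P.grid n k) (P.tentScale n α k)

variable [NeZero n]

lemma exists_forall_Qnorm_gridTent_le (hα₀ : 0 < α) (hα₁ : α < 1) (hα : 2 * α < n)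
    (hdim : n - 2 * α ≤ n * P.dimension) :
    ∃ M : ℝ≥0∞, M ≠ ⊤ ∧ ∀ k, Qnorm α (P.gridTent n α k) ≤ M := by
  refine ⟨_, ?_, fun k => Qnorm_tent_le hα₀.le ⟨0, zero_mem_grid⟩ (P.tentScale_pos n α k)
    (P.one_le_packingConstant n) fun x r => card_filter_dist_lt_mul_rpow_le (by linarith) hdim
      (P.tentScale_pos n α k) (tentScale_rpow hα) x⟩
  exact ENNReal.rpow_ne_top_of_nonneg (by norm_num) (ENNReal.mul_ne_top ENNReal.ofReal_ne_top
    (ENNReal.mul_ne_top measure_ball_lt_top.ne (truncatedMass_lt_top hα₀ hα₁).ne))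

lemma memQ_gridTent (hα₀ : 0 < α) (hα₁ : α < 1) (hα : 2 * α < n)
    (hdim : n - 2 * α ≤ n * P.dimension) : MemQ α (P.gridTent n α k) := by
  obtain ⟨M, hM, hle⟩ := exists_forall_Qnorm_gridTent_le hα₀ hα₁ hα hdim
  have hcont : Continuous (P.gridTent n α k) := continuous_tent _ _
  exact ⟨Continuous.locallyIntegrable (by fun_prop), (hle k).trans_lt hM.lt_top⟩

lemma tendsto_energy_gridTent_comp (hα₀ : 0 ≤ α) (hα : 2 * α < n)
    (hdim : n - 2 * α < n * P.dimension) :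
    Tendsto (fun k => energy α (P.gridTent n α (k + 1) ∘ (P.stretches n).map)
      (ball 0 (P.enclosingRadius n))) atTop (𝓝 ⊤) := by
  have hlim : Tendsto (fun k => spikeConstant n α * ENNReal.ofReal
      (2 ^ (n * (k + 1)) * P.spikeRadius n α (k + 1) ^ ((n : ℝ) - 2 * α))) atTop (𝓝 ⊤) := by
    have := ENNReal.Tendsto.const_mul (a := spikeConstant n α) (ENNReal.tendsto_ofReal_atTop.comp
      ((tendsto_two_pow_mul_spikeRadius_rpow hα hdim).comp (tendsto_add_atTop_nat 1)))
      (.inl top_ne_zero)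
    rwa [ENNReal.mul_top (spikeConstant_ne_zero n α)] at this
  refine tendsto_nhds_top_mono hlim ?_
  filter_upwards [(tendsto_add_atTop_nat 1).eventually (eventually_four_mul_tentScale_le hα hdim)]
    with k hk
  have hρ := P.spikeRadius_pos n α (k + 1)
  refine le_trans ?_ (spikeConstant_mul_card_le_energy_comp hα₀ (P.tentScale_pos n α (k + 1)) hρ
    (P.spikeRadius_sq n α (k + 1)) (two_mul_spikeRadius_le hk))
  gcongr
  exact mod_cast P.two_pow_le_card_newPoints k

lemma tendsto_Qnorm_gridTent_comp (hα₀ : 0 ≤ α) (hα : 2 * α < n)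
    (hdim : n - 2 * α < n * P.dimension) :
    Tendsto (fun k => Qnorm α (P.gridTent n α (k + 1) ∘ (P.stretches n).map)) atTop (𝓝 ⊤) := by
  have hR := P.enclosingRadius_pos n
  set c := ENNReal.ofReal (P.enclosingRadius n ^ (2 * α - (n : ℝ)))
  have hc : c ≠ 0 := (ENNReal.ofReal_pos.2 (by positivity)).ne'
  have hlim := (ENNReal.continuous_rpow_const (y := (1 / 2 : ℝ))).tendsto ⊤ |>.comp <|
    (ENNReal.mul_top hc ▸ ENNReal.Tendsto.const_mul (a := c)
      (tendsto_energy_gridTent_comp hα₀ hα hdim) (.inl top_ne_zero) :)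
  rw [ENNReal.top_rpow_of_pos (by norm_num)] at hlim
  exact tendsto_nhds_top_mono hlim (.of_forall fun k => le_Qnorm _ 0 hR)

theorem exists_memQ_lt_Qnorm_comp (hα₀ : 0 < α) (hα₁ : α < 1) (hα : 2 * α < n)
    (hdim : n - 2 * α < n * P.dimension) {C : ℝ≥0∞} (hC : C ≠ ⊤) :
    ∃ u : Pt n → ℝ, MemQ α u ∧ 0 < Qnorm α u ∧
      C * Qnorm α u < Qnorm α (u ∘ (P.stretches n).map) := by
  obtain ⟨M, hM, hle⟩ := exists_forall_Qnorm_gridTent_le hα₀ hα₁ hα hdim.le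
  have hlarge := (tendsto_Qnorm_gridTent_comp hα₀.le hα hdim).eventually
    (lt_mem_nhds (ENNReal.mul_lt_top hC.lt_top hM.lt_top))
  have hsmall :=
    (tendsto_add_atTop_nat 1).eventually (eventually_four_mul_tentScale_le hα hdim)
  obtain ⟨k, hk, hk'⟩ := (hlarge.and hsmall).exists
  refine ⟨P.gridTent n α (k + 1), memQ_gridTent hα₀ hα₁ hα hdim.le,
    Qnorm_tent_pos hα₀.le (P.tentScale_pos n α (k + 1)) ?_, hk.trans_le' (by gcongr; exact hle _)⟩
  linarith [P.tentScale_pos n α (k + 1)]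

end Unbounded

end CantorParameters

theorem exists_bounded_counterexample_general (n : ℕ) (α₀ : ℝ) (hα₀ : 0 < α₀) (hn : 2 * α₀ < n) :
    ∃ E : Set (Pt n), Bornology.IsBounded E ∧ dimLoc E = (n : ℝ) - 2 * α₀ ∧
      ∃ f : Pt n ≃ₜ Pt n,
        (∃ K : ℝ≥0, LipschitzWith K f) ∧
        (∃ η : ℝ≥0 ≃o ℝ≥0, IsQS f η) ∧
        ∃ Jf : Pt n → ℝ, JacobianCOV f Jf ∧ MemA1 Jf (closure E) ∧
          ∀ α ∈ Ioo α₀ 1, 2 * α < n → ∀ C > (0 : ℝ), ∃ u : Pt n → ℝ, MemQ α u ∧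
            0 < Qnorm α u ∧ ENNReal.ofReal C * Qnorm α u < Qnorm α (u ∘ f) := by
  have hn₀ : (0 : ℝ) < n := by linarith
  have : NeZero n := ⟨Nat.cast_pos.1 hn₀ |>.ne'⟩
  obtain ⟨P, hdim, hhalf⟩ := CantorParameters.exists_dimension_eq (d := (n - 2 * α₀) / n)
    ⟨div_pos (by linarith) hn₀, (div_lt_one hn₀).2 (by linarith)⟩
    (show 0 < 1 / (2 * √n) by positivity)
  replace hdim : n * P.dimension = n - 2 * α₀ := by rw [hdim, mul_div_cancel₀ _ hn₀.ne']
  have hball : P.dust n ⊆ ball 0 1 := fun p hp => by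
    rw [mem_ball_zero_iff]
    calc ‖p‖ ≤ √n * P.halfLength := P.norm_le_of_mem_dust hp
      _ = 1 / 2 := by rw [hhalf]; field_simp
      _ < 1 := one_half_lt_one
  have hlip := (P.stretches n).lipschitzWith_map
  refine ⟨P.dust n, isBounded_ball.subset hball, (P.dimLoc_dust hball).trans hdim,
    (P.stretches n).homeomorph, ⟨2, hlip⟩, ⟨quadraticDistortion, (P.stretches n).isQS_map⟩, _,
    jacobianCOV_of_lipschitzWith hlip, SeparatedBalls.memA1_abs_det_fderiv_map subset_closure, ?_⟩
  intro α hα hαn C _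
  exact CantorParameters.exists_memQ_lt_Qnorm_comp (hα₀.trans hα.1) hα.2 hαn
    (by linarith [hα.1]) ENNReal.ofReal_ne_top

/-- Theorem 1.5: for `n ≥ 2` and `α₀ ∈ (0,1)` there exist a bounded set `E`
with `dim_L E = n - 2α₀` and a Lipschitz quasisymmetric homeomorphism `f` of `ℝⁿ` with
`J_f ∈ A₁(ℝⁿ; closure E)`, such that `u ↦ u ∘ f` is unbounded on `Q_α(ℝⁿ)` for every
`α ∈ (α₀, 1)`. -/
theorem exists_bounded_counterexample (n : ℕ) (hn : 2 ≤ n) (α₀ : ℝ)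
    (hα₀ : α₀ ∈ Ioo (0:ℝ) 1) :
    ∃ E : Set (Pt n), Bornology.IsBounded E ∧ dimLoc E = (n : ℝ) - 2 * α₀ ∧
      ∃ f : Pt n ≃ₜ Pt n,
        (∃ K : ℝ≥0, LipschitzWith K (⇑f)) ∧
        (∃ η : ℝ≥0 ≃o ℝ≥0, IsQS (⇑f) η) ∧
        ∃ Jf : Pt n → ℝ, JacobianCOV (⇑f) Jf ∧ MemA1 Jf (closure E) ∧
          ∀ α ∈ Ioo α₀ (1:ℝ), ∀ C > (0:ℝ), ∃ u : Pt n → ℝ, MemQ α u ∧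
            0 < Qnorm α u ∧
            ENNReal.ofReal C * Qnorm α u < Qnorm α (u ∘ ⇑f) := by
  have hn' : (2 : ℝ) ≤ n := mod_cast hn
  obtain ⟨E, hE, hdim, f, hf, hqs, Jf, hJ, hA1, hunb⟩ :=
    exists_bounded_counterexample_general n α₀ hα₀.1 (by linarith [hα₀.2])
  exact ⟨E, hE, hdim, f, hf, hqs, Jf, hJ, hA1, fun α hα => hunb α hα (by linarith [hα.2])⟩

end
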